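/- For every integer n ≥ 2, let 𝒢_n be the space of marked n-generated groups, identified with the set of normal subgroups of the free group F_n of rank n, topologized as a subspace of 2^{F_n} with the product topology. Let ℋ_n ⊆ 𝒢_n consist of the marked groups (G,X) such that G is non-elementary hyperbolic (hyperbolic and containing no cyclic subgroup of finite index) and has no non-trivial finite normal subgroup, and let ℋ̄_n be the closure of ℋ_n in 𝒢_n. Then ℋ̄_n contains 2^{ℵ₀} elements that are pairwise incomparable with respect to the relation (G,X) ≼_is (H,Y) defined by f_{G,X} ≼ f_{H,Y}. In particular, the set of ∼-equivalence classes of isoperimetric spectra of finitely generated groups has the cardinality of the continuum. -/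

import Mathlib

open Function

namespace IsoSpecPaper

variable {ι : Type*} {G : Type*} [Group G]

/-- The (reduced) length of an element of a free group. -/
noncomputable def wnorm (w : FreeGroup ι) : ℕ :=
  @FreeGroup.norm ι (Classical.decEq ι) w

/-- `triv φ k` : the set of words of length at most `k` in the generators
(and their inverses) representing the identity of `G` under the marking `φ`. -/
noncomputable def triv (φ : FreeGroup ι →* G) (k : ℕ) : Set (FreeGroup ι) :=
  {w | wnorm w ≤ k ∧ φ w = 1}

/-- `AreaLe R w l` : `w` is a product of `l` conjugates of elements of `R` or
their inverses in the free group. -/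
def AreaLe (R : Set (FreeGroup ι)) (w : FreeGroup ι) (l : ℕ) : Prop :=
  ∃ L : List (FreeGroup ι × FreeGroup ι), L.length = l ∧
    (∀ p ∈ L, p.2 ∈ R ∨ p.2⁻¹ ∈ R) ∧
    w = (L.map fun p => p.1⁻¹ * p.2 * p.1).prod

/-- The area of `w` with respect to the set of relators `R`. -/
noncomputable def area (R : Set (FreeGroup ι)) (w : FreeGroup ι) : ℕ :=
  sInf {l | AreaLe R w l}

/-- The isoperimetric spectrum of the marked group `(G, φ)`:
`isoSpec φ k m n = max { area_{S_m}(w) : w ∈ ⟪S_k⟫, ‖w‖ ≤ n }`. -/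
noncomputable def isoSpec (φ : FreeGroup ι →* G) (k m n : ℕ) : ℕ :=
  sSup (area (triv φ m) '' {w | w ∈ Subgroup.normalClosure (triv φ k) ∧ wnorm w ≤ n})

/-- The real-valued isoperimetric spectrum. -/
noncomputable def isoSpecR (φ : FreeGroup ι →* G) : ℕ → ℕ → ℕ → ℝ :=
  fun k m n => (isoSpec φ k m n : ℝ)

/-- The Dehn function of the presentation with relators `R`. -/
noncomputable def dehn (R : Set (FreeGroup ι)) (n : ℕ) : ℕ :=
  sSup (area R '' {w | w ∈ Subgroup.normalClosure R ∧ wnorm w ≤ n})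

/-- The quasi-order `f ≼ g` on functions of triples `(k,m,n)` of positive integers
with `m ≥ k`. -/
def SpecLE (f g : ℕ → ℕ → ℕ → ℝ) : Prop :=
  ∃ C : ℕ, 0 < C ∧ ∀ k m n : ℕ, 0 < k → 0 < m → 0 < n → C * k ≤ m →
    f k (C * m) n ≤ C * g (C * k) m (C * n) + C * (n : ℝ) / m + C

/-- Equivalence of isoperimetric functions: `f ∼ g`. -/
def SpecEquiv (f g : ℕ → ℕ → ℕ → ℝ) : Prop := SpecLE f g ∧ SpecLE g f

/-- The linear spectrum `(k,m,n) ↦ n/m`. -/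
noncomputable def linSpec : ℕ → ℕ → ℕ → ℝ := fun _ m n => (n : ℝ) / m

/-- The word length of `g ∈ G` with respect to the marking `φ`. -/
noncomputable def wlen (φ : FreeGroup ι →* G) (g : G) : ℕ :=
  sInf {n | ∃ w : FreeGroup ι, wnorm w = n ∧ φ w = g}

/-- The word metric on `G` with respect to the marking `φ`. -/
noncomputable def wdist (φ : FreeGroup ι →* G) (g h : G) : ℕ := wlen φ (g⁻¹ * h)

/-- Quasi-isometry of marked groups with respect to their word metrics. -/
noncomputable def QuasiIsometric {H : Type*} [Group H] {κ : Type*}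
    (φ : FreeGroup ι →* G) (ψ : FreeGroup κ →* H) : Prop :=
  ∃ L : ℝ, 0 ≤ L ∧ ∃ (α : G → H) (β : H → G),
    (∀ x y : G, (wdist ψ (α x) (α y) : ℝ) ≤ L * wdist φ x y + L) ∧
    (∀ u v : H, (wdist φ (β u) (β v) : ℝ) ≤ L * wdist ψ u v + L) ∧
    (∀ t : H, (wdist ψ (α (β t)) t : ℝ) ≤ L) ∧
    (∀ s : G, (wdist φ (β (α s)) s : ℝ) ≤ L)

/-- A (combinatorial) geodesic path of length `n` in the Cayley graph of `(G, φ)`: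
consecutive vertices are at distance at most `1` and the endpoints are at
distance exactly `n`. -/
noncomputable def IsGeodesic (φ : FreeGroup ι →* G) {n : ℕ} (p : Fin (n + 1) → G) : Prop :=
  (∀ i : Fin n, wdist φ (p i.castSucc) (p i.succ) ≤ 1) ∧
  wdist φ (p 0) (p (Fin.last n)) = n

/-- Every vertex of the path `p` lies within distance `δ` of the set `A`. -/
noncomputable def ThinAt (φ : FreeGroup ι →* G) (δ : ℝ) {n : ℕ}
    (p : Fin (n + 1) → G) (A : Set G) : Prop :=
  ∀ i, ∃ a ∈ A, (wdist φ (p i) a : ℝ) ≤ δ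

/-- The Cayley graph of `(G, φ)` is `δ`-hyperbolic: every geodesic triangle is `δ`-thin. -/
noncomputable def HypConst (φ : FreeGroup ι →* G) (δ : ℝ) : Prop :=
  ∀ (n₁ n₂ n₃ : ℕ) (p : Fin (n₁ + 1) → G) (q : Fin (n₂ + 1) → G) (r : Fin (n₃ + 1) → G),
    IsGeodesic φ p → IsGeodesic φ q → IsGeodesic φ r →
    p (Fin.last n₁) = q 0 → q (Fin.last n₂) = r 0 → r (Fin.last n₃) = p 0 →
    ThinAt φ δ p (Set.range q ∪ Set.range r) ∧
    ThinAt φ δ q (Set.range r ∪ Set.range p) ∧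
    ThinAt φ δ r (Set.range p ∪ Set.range q)

/-- The marked group `(G, φ)` is hyperbolic. -/
noncomputable def IsHyperbolic (φ : FreeGroup ι →* G) : Prop :=
  ∃ δ : ℝ, 0 ≤ δ ∧ HypConst φ δ

/-- `G` (marked by `φ`) is a limit (direct limit) of hyperbolic groups. -/
noncomputable def LimitOfHyperbolic (φ : FreeGroup ι →* G) : Prop :=
  Surjective φ ∧ ∃ R : ℕ → Set (FreeGroup ι),
    (∀ i j, i ≤ j → R i ⊆ R j) ∧
    φ.ker = Subgroup.normalClosure (⋃ i, R i) ∧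
    ∀ i, IsHyperbolic (QuotientGroup.mk' (Subgroup.normalClosure (R i)))

/-- `G` (marked by `φ`) is well-approximated by hyperbolic groups. -/
noncomputable def WellApproximated (φ : FreeGroup ι →* G) : Prop :=
  Surjective φ ∧ ∃ R : ℕ → Set (FreeGroup ι),
    (∀ i j, i ≤ j → R i ⊆ R j) ∧
    φ.ker = Subgroup.normalClosure (⋃ i, R i) ∧
    (∀ i, IsHyperbolic (QuotientGroup.mk' (Subgroup.normalClosure (R i)))) ∧
    ∃ C : ℕ, 0 < C ∧ ∀ i : ℕ, 0 < i →
      (∀ w : FreeGroup ι, wnorm w ≤ i → φ w = 1 →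
        w ∈ Subgroup.normalClosure (R i)) ∧
      HypConst (QuotientGroup.mk' (Subgroup.normalClosure (R i))) ((C * i : ℕ) : ℝ)

/-- The space `𝒢_n` of marked `n`-generated groups, identified with the set of normal
subgroups of the free group `F_n`. -/
def MarkedGroup (n : ℕ) : Type := {H : Subgroup (FreeGroup (Fin n)) // H.Normal}

/-- The characteristic function of a marked group, as an element of the Cantor space
`2^{F_n}`. -/
noncomputable def mgChi {n : ℕ} (H : MarkedGroup n) : FreeGroup (Fin n) → Bool :=
  fun w => @decide (w ∈ H.1) (Classical.propDecidable _)

/-- The topology on `𝒢_n` induced from the product topology on `2^{F_n}`. -/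
noncomputable instance (n : ℕ) : TopologicalSpace (MarkedGroup n) :=
  TopologicalSpace.induced mgChi inferInstance

/-- The isoperimetric spectrum of a marked group. -/
noncomputable def mgSpec {n : ℕ} (H : MarkedGroup n) : ℕ → ℕ → ℕ → ℝ :=
  letI := H.2
  isoSpecR (QuotientGroup.mk' H.1)

/-- The quasi-order `≼_is` on marked groups: comparison of isoperimetric spectra. -/
noncomputable def precIs {n : ℕ} (H₁ H₂ : MarkedGroup n) : Prop :=
  SpecLE (mgSpec H₁) (mgSpec H₂)

/-- The subset `ℋ_n ⊆ 𝒢_n` of non-elementary hyperbolic marked groups without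
non-trivial finite normal subgroups. -/
noncomputable def Hset (n : ℕ) : Set (MarkedGroup n) :=
  {H | letI := H.2
       IsHyperbolic (QuotientGroup.mk' H.1) ∧
       (¬ ∃ g : FreeGroup (Fin n) ⧸ H.1, (Subgroup.zpowers g).index ≠ 0) ∧
       (∀ K : Subgroup (FreeGroup (Fin n) ⧸ H.1), K.Normal →
          (K : Set (FreeGroup (Fin n) ⧸ H.1)).Finite → K = ⊥)}

/-!
Let `t` be a shift of levels and `a` an involution which preserves them. A *block* with parameters
`(p, M)` is an action of `⟨a, t⟩` in which `a` acts only at the levels `0` and `p`, so that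
`u = a · aᵗᵖ` (`xWord`) is a translation modulo `M + 1` at the level `0`. The groups of the theorem
are quotients of the free group by intersections of kernels of block actions.

*Limits of hyperbolic groups.* For finitely many blocks, the conjugates of `a` by `t⁰, …, tᴺ`
generate a finite group, and `t` conjugates two of its subgroups. The resulting HNN extension of a
finite group has a normal form along its Bass–Serre tree which changes by a bounded amount under
multiplication by a generator. This makes it hyperbolic, with areas of words bounded by their
length. It has the same short relators as the intersection of block kernels; and blocks with a large
`p` do not affect short words.

*Spectra.* If all blocks have parameter `p` either far from that of the `i`-th block or equal to it,
then `u` commutes with its translate `v` by one level. Any relator of length at most `m ≤ M` which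
is trivial in the block `(p, M)` acts in a Heisenberg extension of this block as a central
translation by at most `m²`, while `[uⁿ, vⁿ]` translates by `n²`. So its area is quadratic in `n`
when the `i`-th block is present. When it is absent, the group is indistinguishable at the relevant
scale from the HNN extension of the preceding blocks, and the area is linear. If the parameters grow
fast enough, two groups with sets of blocks having infinite differences are incomparable.
-/

open scoped commutatorElement

/-! ### Word length in free groups -/

theorem wnorm_one : wnorm (1 : FreeGroup ι) = 0 :=
  letI := Classical.decEq ι; FreeGroup.norm_one

theorem wnorm_inv (x : FreeGroup ι) : wnorm x⁻¹ = wnorm x :=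
  letI := Classical.decEq ι; FreeGroup.norm_inv_eq

theorem wnorm_mul_le (x y : FreeGroup ι) : wnorm (x * y) ≤ wnorm x + wnorm y :=
  letI := Classical.decEq ι; FreeGroup.norm_mul_le x y

theorem wnorm_of (i : ι) : wnorm (FreeGroup.of i) = 1 :=
  letI := Classical.decEq ι; FreeGroup.norm_of i

theorem wnorm_mk_le (L : List (ι × Bool)) : wnorm (FreeGroup.mk L) ≤ L.length :=
  letI := Classical.decEq ι; FreeGroup.norm_mk_le

theorem wnorm_eq_zero {x : FreeGroup ι} : wnorm x = 0 ↔ x = 1 :=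
  letI := Classical.decEq ι; FreeGroup.norm_eq_zero

theorem wnorm_pow_le (x : FreeGroup ι) (n : ℕ) : wnorm (x ^ n) ≤ n * wnorm x := by
  induction n with
  | zero => simp [wnorm_one]
  | succ n ih =>
    calc wnorm (x ^ (n + 1)) ≤ wnorm (x ^ n) + wnorm x := pow_succ x n ▸ wnorm_mul_le _ _
      _ ≤ (n + 1) * wnorm x := by linarith

theorem wnorm_zpow_units (x : FreeGroup ι) (u : ℤˣ) : wnorm (x ^ (u : ℤ)) = wnorm x := by
  rcases Int.units_eq_one_or u with rfl | rfl <;> simp [wnorm_inv]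

/-- The reduced word of an element of a free group; as in `wnorm`, the decidability of equality
that `FreeGroup.toWord` asks for is supplied classically. -/
noncomputable def reducedWord (x : FreeGroup ι) : List (ι × Bool) :=
  letI := Classical.decEq ι; x.toWord

theorem length_reducedWord (x : FreeGroup ι) : (reducedWord x).length = wnorm x := rfl

theorem mk_reducedWord (x : FreeGroup ι) : FreeGroup.mk (reducedWord x) = x :=
  letI := Classical.decEq ι; FreeGroup.mk_toWord

theorem isReduced_reducedWord (x : FreeGroup ι) : FreeGroup.IsReduced (reducedWord x) :=
  letI := Classical.decEq ι; FreeGroup.isReduced_toWord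

theorem reducedWord_inv (x : FreeGroup ι) :
    reducedWord x⁻¹ = FreeGroup.invRev (reducedWord x) :=
  letI := Classical.decEq ι; FreeGroup.toWord_inv x

theorem wnorm_mk_of_isReduced {L : List (ι × Bool)} (hL : FreeGroup.IsReduced L) :
    wnorm (FreeGroup.mk L) = L.length :=
  letI := Classical.decEq ι
  congrArg List.length (FreeGroup.toWord_mk.trans hL.reduce_eq)

theorem finite_setOf_wnorm_le [Finite ι] (k : ℕ) : {w : FreeGroup ι | wnorm w ≤ k}.Finite := by
  refine ((List.finite_length_le (ι × Bool) k).image FreeGroup.mk).subset fun w hw => ?_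
  exact ⟨reducedWord w, (length_reducedWord w).trans_le hw, mk_reducedWord w⟩

theorem wnorm_inv_mul_of_head?_ne {x y : FreeGroup ι}
    (h : (reducedWord x).head? ≠ (reducedWord y).head?) :
    wnorm (x⁻¹ * y) = wnorm x + wnorm y := by
  have no_cancellation : FreeGroup.IsReduced (reducedWord x⁻¹ ++ reducedWord y) := by
    refine List.isChain_append.2 ⟨isReduced_reducedWord _, isReduced_reducedWord _, ?_⟩
    rintro a ha ⟨j, b⟩ hb rfl
    simp only [reducedWord_inv, FreeGroup.invRev, List.getLast?_reverse, List.head?_map,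
      Option.mem_def, Option.map_eq_some_iff] at ha
    obtain ⟨⟨i, c⟩, hc, rfl⟩ := ha
    have hcb : c ≠ b := by
      rintro rfl
      exact h (hc.trans hb.symm)
    exact Bool.not_eq.2 hcb
  have := wnorm_mk_of_isReduced no_cancellation
  rwa [← FreeGroup.mul_mk, mk_reducedWord, mk_reducedWord, List.length_append,
    length_reducedWord, length_reducedWord, wnorm_inv] at this

theorem wnorm_inv_mul_add_two_le_of_head?_eq {x y : FreeGroup ι}
    (h : (reducedWord x).head? = (reducedWord y).head?) (hx : x ≠ 1) :
    wnorm (x⁻¹ * y) + 2 ≤ wnorm x + wnorm y := by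
  rcases hX : reducedWord x with _ | ⟨a, X⟩
  · exact absurd (by rw [← mk_reducedWord x, hX]; rfl) hx
  obtain ⟨Y, hY⟩ : ∃ Y, reducedWord y = a :: Y :=
    List.head?_eq_some_iff.1 (by rw [← h, hX, List.head?_cons])
  have hxX : x = FreeGroup.mk [a] * FreeGroup.mk X := by
    rw [FreeGroup.mul_mk, List.singleton_append, ← hX, mk_reducedWord]
  have hyY : y = FreeGroup.mk [a] * FreeGroup.mk Y := by
    rw [FreeGroup.mul_mk, List.singleton_append, ← hY, mk_reducedWord]
  have cancel : x⁻¹ * y = (FreeGroup.mk X)⁻¹ * FreeGroup.mk Y := by rw [hxX, hyY]; group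
  calc wnorm (x⁻¹ * y) + 2 ≤ wnorm (FreeGroup.mk X)⁻¹ + wnorm (FreeGroup.mk Y) + 2 := by
        rw [cancel]; gcongr; exact wnorm_mul_le _ _
    _ ≤ X.length + Y.length + 2 := by
        rw [wnorm_inv]; gcongr <;> exact wnorm_mk_le _
    _ = wnorm x + wnorm y := by
        rw [← length_reducedWord, ← length_reducedWord, hX, hY, List.length_cons,
          List.length_cons]
        omega

theorem head?_ne_of_between {c u v : FreeGroup ι}
    (hc : wnorm (c⁻¹ * u) + wnorm (c⁻¹ * v) ≤ wnorm (u⁻¹ * v)) (hu : c⁻¹ * u ≠ 1) :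
    (reducedWord (c⁻¹ * u)).head? ≠ (reducedWord (c⁻¹ * v)).head? := by
  intro h
  have := wnorm_inv_mul_add_two_le_of_head?_eq h hu
  rw [show (c⁻¹ * u)⁻¹ * (c⁻¹ * v) = u⁻¹ * v by group] at this
  omega

/-- The vertex at distance `j` from `u` on the geodesic from `u` to `v` in the Cayley tree of the
free group, and `v` once `j` exceeds the distance from `u` to `v`. -/
noncomputable def treeGeodesic (u v : FreeGroup ι) (j : ℕ) : FreeGroup ι :=
  u * FreeGroup.mk ((reducedWord (u⁻¹ * v)).take j)

theorem treeGeodesic_zero (u v : FreeGroup ι) : treeGeodesic u v 0 = u :=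
  mul_one u

theorem treeGeodesic_wnorm (u v : FreeGroup ι) : treeGeodesic u v (wnorm (u⁻¹ * v)) = v := by
  rw [treeGeodesic, ← length_reducedWord, List.take_length, mk_reducedWord, mul_inv_cancel_left]

theorem treeGeodesic_between (u v : FreeGroup ι) (j : ℕ) :
    wnorm ((treeGeodesic u v j)⁻¹ * u) + wnorm ((treeGeodesic u v j)⁻¹ * v) ≤
      wnorm (u⁻¹ * v) := by
  set L := reducedWord (u⁻¹ * v) with hL
  have to_u : (treeGeodesic u v j)⁻¹ * u = (FreeGroup.mk (L.take j))⁻¹ := by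
    rw [treeGeodesic, ← hL]; group
  have to_v : (treeGeodesic u v j)⁻¹ * v = FreeGroup.mk (L.drop j) := by
    rw [treeGeodesic, ← hL, mul_inv_rev, mul_assoc, inv_mul_eq_iff_eq_mul, FreeGroup.mul_mk,
      List.take_append_drop, hL, mk_reducedWord]
  calc wnorm ((treeGeodesic u v j)⁻¹ * u) + wnorm ((treeGeodesic u v j)⁻¹ * v)
      ≤ (L.take j).length + (L.drop j).length := by
        rw [to_u, to_v, wnorm_inv]; gcongr <;> exact wnorm_mk_le _
    _ = wnorm (u⁻¹ * v) := by
        rw [← List.length_append, List.take_append_drop, hL, length_reducedWord]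

theorem wnorm_treeGeodesic_succ_le (u v : FreeGroup ι) (j : ℕ) :
    wnorm ((treeGeodesic u v j)⁻¹ * treeGeodesic u v (j + 1)) ≤ 1 := by
  set L := reducedWord (u⁻¹ * v) with hL
  have step : (treeGeodesic u v j)⁻¹ * treeGeodesic u v (j + 1) =
      FreeGroup.mk L[j]?.toList := by
    rw [treeGeodesic, treeGeodesic, ← hL, List.take_add_one, ← FreeGroup.mul_mk]
    group
  rw [step]
  refine (wnorm_mk_le _).trans ?_
  cases L[j]? <;> simp

/-! ### Word metrics -/

theorem wlen_map_le (φ : FreeGroup ι →* G) (w : FreeGroup ι) : wlen φ (φ w) ≤ wnorm w :=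
  Nat.sInf_le ⟨w, rfl, rfl⟩

theorem wdist_map_map_le (φ : FreeGroup ι →* G) (u v : FreeGroup ι) :
    wdist φ (φ u) (φ v) ≤ wnorm (u⁻¹ * v) := by
  rw [wdist, ← map_inv, ← map_mul]
  exact wlen_map_le φ _

theorem wdist_self (φ : FreeGroup ι →* G) (g : G) : wdist φ g g = 0 := by
  have := wlen_map_le φ 1
  rwa [map_one, wnorm_one, Nat.le_zero, ← inv_mul_cancel g] at this

section WordMetric

variable {φ : FreeGroup ι →* G}

theorem exists_wnorm_eq_wlen (hφ : Surjective φ) (g : G) :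
    ∃ w, wnorm w = wlen φ g ∧ φ w = g :=
  Nat.sInf_mem (s := {n | ∃ w, wnorm w = n ∧ φ w = g}) ((hφ g).imp' wnorm fun w hw => ⟨w, rfl, hw⟩)

theorem wdist_triangle (hφ : Surjective φ) (a b c : G) :
    wdist φ a c ≤ wdist φ a b + wdist φ b c := by
  obtain ⟨u, hu, hφu⟩ := exists_wnorm_eq_wlen hφ (a⁻¹ * b)
  obtain ⟨v, hv, hφv⟩ := exists_wnorm_eq_wlen hφ (b⁻¹ * c)
  have hac : a⁻¹ * c = φ (u * v) := by rw [map_mul, hφu, hφv]; group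
  calc wdist φ a c ≤ wnorm (u * v) := by rw [wdist, hac]; exact wlen_map_le φ _
    _ ≤ wnorm u + wnorm v := wnorm_mul_le u v
    _ = wdist φ a b + wdist φ b c := by rw [hu, hv, wdist, wdist]

theorem wdist_comm (hφ : Surjective φ) (a b : G) : wdist φ a b = wdist φ b a := by
  suffices h : ∀ a b, wdist φ a b ≤ wdist φ b a from le_antisymm (h a b) (h b a)
  intro a b
  obtain ⟨u, hu, hφu⟩ := exists_wnorm_eq_wlen hφ (b⁻¹ * a)
  have hab : a⁻¹ * b = φ u⁻¹ := by rw [map_inv, hφu]; group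
  calc wdist φ a b ≤ wnorm u⁻¹ := by rw [wdist, hab]; exact wlen_map_le φ _
    _ = wdist φ b a := by rw [wnorm_inv, hu, wdist]

theorem wdist_le_sub_of_steps (hφ : Surjective φ) {n : ℕ} {p : Fin (n + 1) → G}
    (hp : ∀ i : Fin n, wdist φ (p i.castSucc) (p i.succ) ≤ 1) {i j : Fin (n + 1)} (hij : i ≤ j) :
    wdist φ (p i) (p j) ≤ j - i := by
  induction j using Fin.induction with
  | zero => simp [Fin.le_zero_iff.1 hij, wdist_self]
  | succ j ih =>
    rcases hij.eq_or_lt with rfl | hlt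
    · simp [wdist_self]
    · have hij' : i ≤ j.castSucc := Fin.le_castSucc_iff.2 hlt
      have := ih hij'
      have := hp j
      have := wdist_triangle hφ (p i) (p j.castSucc) (p j.succ)
      rw [Fin.le_def] at hij'
      simp only [Fin.val_castSucc, Fin.val_succ] at *
      omega

theorem IsGeodesic.wdist_eq (hφ : Surjective φ) {n : ℕ} {p : Fin (n + 1) → G}
    (hp : IsGeodesic φ p) {i j : Fin (n + 1)} (hij : i ≤ j) : wdist φ (p i) (p j) = j - i := by
  have h₀ := wdist_le_sub_of_steps hφ hp.1 (Fin.zero_le i)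
  have h₁ := wdist_le_sub_of_steps hφ hp.1 hij
  have h₂ := wdist_le_sub_of_steps hφ hp.1 (Fin.le_last j)
  have h₃ := wdist_triangle hφ (p 0) (p i) (p (Fin.last n))
  have h₄ := wdist_triangle hφ (p i) (p j) (p (Fin.last n))
  rw [hp.2] at h₃
  rw [Fin.le_def] at hij
  simp only [Fin.val_zero, Fin.val_last] at *
  omega

end WordMetric

/-! ### Lipschitz sections and hyperbolicity -/

/-- `σ` is a `B`-Lipschitz section of the marking `φ`, from the Cayley graph of the marked group
to the Cayley tree of the free group. -/
structure IsLipschitzSection (φ : FreeGroup ι →* G) (B : ℕ) (σ : G → FreeGroup ι) : Prop where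
  map_section : ∀ g, φ (σ g) = g
  wnorm_step_le : ∀ g i, wnorm ((σ g)⁻¹ * σ (g * φ (FreeGroup.of i))) ≤ B

namespace IsLipschitzSection

variable {φ : FreeGroup ι →* G} {B : ℕ} {σ : G → FreeGroup ι}

theorem surjective (h : IsLipschitzSection φ B σ) : Surjective φ := fun g =>
  ⟨σ g, h.map_section g⟩

theorem wnorm_mk_singleton_step_le (h : IsLipschitzSection φ B σ) (g : G) (x : ι × Bool) :
    wnorm ((σ g)⁻¹ * σ (g * φ (FreeGroup.mk [x]))) ≤ B := by
  obtain ⟨i, _ | _⟩ := x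
  · have := h.wnorm_step_le (g * (φ (FreeGroup.of i))⁻¹) i
    rwa [inv_mul_cancel_right, ← wnorm_inv, mul_inv_rev, inv_inv, ← map_inv] at this
  · exact h.wnorm_step_le g i

theorem wnorm_le_of_wdist_le_one (h : IsLipschitzSection φ B σ) {a b : G}
    (hab : wdist φ a b ≤ 1) : wnorm ((σ a)⁻¹ * σ b) ≤ B := by
  obtain ⟨u, hu, hφu⟩ := exists_wnorm_eq_wlen h.surjective (a⁻¹ * b)
  obtain rfl : b = a * φ u := by rw [hφu, mul_inv_cancel_left]
  have hlen : (reducedWord u).length ≤ 1 := hu.trans_le hab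
  rw [← mk_reducedWord u]
  generalize reducedWord u = L at hlen
  rcases L with _ | ⟨x, _ | _⟩
  · simp [← FreeGroup.one_eq_mk, wnorm_one]
  · exact h.wnorm_mk_singleton_step_le a x
  · simp at hlen

theorem wdist_map_le (h : IsLipschitzSection φ B σ) (c : FreeGroup ι) (g : G) :
    wdist φ (φ c) g ≤ wnorm (c⁻¹ * σ g) := by
  simpa only [h.map_section] using wdist_map_map_le φ c (σ g)

theorem head?_eq_of_wdist_le_one (h : IsLipschitzSection φ B σ) {a b : G} {c : FreeGroup ι}
    (hab : wdist φ a b ≤ 1) (ha : B < wnorm (c⁻¹ * σ a)) :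
    (reducedWord (c⁻¹ * σ a)).head? = (reducedWord (c⁻¹ * σ b)).head? := by
  by_contra hne
  have hdist := wnorm_inv_mul_of_head?_ne hne
  rw [show (c⁻¹ * σ a)⁻¹ * (c⁻¹ * σ b) = (σ a)⁻¹ * σ b by group] at hdist
  have := h.wnorm_le_of_wdist_le_one hab
  omega

theorem head?_eq_of_path (h : IsLipschitzSection φ B σ) {c : FreeGroup ι} {n : ℕ}
    {p : Fin (n + 1) → G} (hp : ∀ i : Fin n, wdist φ (p i.castSucc) (p i.succ) ≤ 1)
    (hfar : ∀ i, B < wnorm (c⁻¹ * σ (p i))) :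
    (reducedWord (c⁻¹ * σ (p 0))).head? = (reducedWord (c⁻¹ * σ (p (Fin.last n)))).head? := by
  suffices ∀ i, (reducedWord (c⁻¹ * σ (p 0))).head? = (reducedWord (c⁻¹ * σ (p i))).head? from
    this _
  intro i
  induction i using Fin.induction with
  | zero => rfl
  | succ i ih => exact ih.trans (h.head?_eq_of_wdist_le_one (hp i) (hfar _))

theorem exists_wnorm_le_of_between (h : IsLipschitzSection φ B σ) {c : FreeGroup ι} {n : ℕ}
    {p : Fin (n + 1) → G} (hp : ∀ i : Fin n, wdist φ (p i.castSucc) (p i.succ) ≤ 1)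
    (hc : wnorm (c⁻¹ * σ (p 0)) + wnorm (c⁻¹ * σ (p (Fin.last n))) ≤
      wnorm ((σ (p 0))⁻¹ * σ (p (Fin.last n)))) :
    ∃ i, wnorm (c⁻¹ * σ (p i)) ≤ B := by
  by_contra! hfar
  have hne : c⁻¹ * σ (p 0) ≠ 1 := by
    rw [Ne, ← wnorm_eq_zero]
    exact (Nat.zero_le B |>.trans_lt (hfar 0)).ne'
  exact head?_ne_of_between hc hne (h.head?_eq_of_path hp hfar)

theorem exists_flanking (h : IsLipschitzSection φ B σ) {n : ℕ} {p : Fin (n + 1) → G}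
    (hp : ∀ i : Fin n, wdist φ (p i.castSucc) (p i.succ) ≤ 1) (i : Fin (n + 1)) :
    ∃ i₁ ≤ i, ∃ i₂ ≥ i, ∃ j k,
      wnorm ((treeGeodesic (σ (p 0)) (σ (p (Fin.last n))) j)⁻¹ *
        treeGeodesic (σ (p 0)) (σ (p (Fin.last n))) k) ≤ 1 ∧
      wnorm ((treeGeodesic (σ (p 0)) (σ (p (Fin.last n))) j)⁻¹ * σ (p i₁)) ≤ B ∧
      wnorm ((treeGeodesic (σ (p 0)) (σ (p (Fin.last n))) k)⁻¹ * σ (p i₂)) ≤ B := by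
  set γ := treeGeodesic (σ (p 0)) (σ (p (Fin.last n))) with hγ
  let NearPast : ℕ → Prop := fun j => ∃ i₁ ≤ i, wnorm ((γ j)⁻¹ * σ (p i₁)) ≤ B
  have near_zero : NearPast 0 :=
    ⟨0, Fin.zero_le i, by simp [hγ, treeGeodesic_zero, wnorm_one]⟩
  by_cases hall : ∀ j, NearPast j
  · set ℓ := wnorm ((σ (p 0))⁻¹ * σ (p (Fin.last n)))
    obtain ⟨i₁, hi₁, hnear⟩ := hall ℓ
    have hend : γ ℓ = σ (p (Fin.last n)) := treeGeodesic_wnorm _ _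
    exact ⟨i₁, hi₁, Fin.last n, Fin.le_last i, ℓ, ℓ, by simp [wnorm_one], hnear,
      by simp [hend, wnorm_one]⟩
  · push Not at hall
    obtain ⟨j, hj, hj'⟩ := Nat.exists_not_and_succ_of_not_zero_of_exists
      (p := fun j => ¬NearPast j) (not_not.2 near_zero) hall
    obtain ⟨i₁, hi₁, hnear₁⟩ := not_not.1 hj
    obtain ⟨i₂, hnear₂⟩ := h.exists_wnorm_le_of_between hp (c := γ (j + 1))
      (treeGeodesic_between _ _ _)
    have hi₂ : i ≤ i₂ := (not_le.1 fun hle => hj' ⟨i₂, hle, hnear₂⟩).le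
    exact ⟨i₁, hi₁, i₂, hi₂, j, j + 1, wnorm_treeGeodesic_succ_le _ _ _, hnear₁, hnear₂⟩

theorem exists_wdist_treeGeodesic_le (h : IsLipschitzSection φ B σ) {n : ℕ}
    {p : Fin (n + 1) → G} (hp : IsGeodesic φ p) (i : Fin (n + 1)) :
    ∃ j, wdist φ (p i) (φ (treeGeodesic (σ (p 0)) (σ (p (Fin.last n))) j)) ≤ 3 * B + 1 := by
  have hφ := h.surjective
  obtain ⟨i₁, hi₁, i₂, hi₂, j, k, hjk, hnear₁, hnear₂⟩ := h.exists_flanking hp.1 i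
  set c := treeGeodesic (σ (p 0)) (σ (p (Fin.last n))) j
  set c' := treeGeodesic (σ (p 0)) (σ (p (Fin.last n))) k
  have hcc' : wdist φ (φ c) (φ c') ≤ 1 := (wdist_map_map_le φ c c').trans hjk
  have hc : wdist φ (φ c) (p i₁) ≤ B := (h.wdist_map_le c (p i₁)).trans hnear₁
  have hc' : wdist φ (φ c') (p i₂) ≤ B := (h.wdist_map_le c' (p i₂)).trans hnear₂
  have long : wdist φ (p i₁) (p i₂) ≤ 2 * B + 1 := by
    have := wdist_triangle hφ (p i₁) (φ c) (p i₂)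
    have := wdist_triangle hφ (φ c) (φ c') (p i₂)
    rw [wdist_comm hφ (p i₁) (φ c)] at *
    omega
  have short : wdist φ (p i) (p i₁) ≤ 2 * B + 1 := by
    rw [hp.wdist_eq hφ (hi₁.trans hi₂)] at long
    rw [wdist_comm hφ, hp.wdist_eq hφ hi₁]
    rw [ge_iff_le, Fin.le_def] at hi₂
    omega
  refine ⟨j, (wdist_triangle hφ (p i) (p i₁) (φ c)).trans ?_⟩
  rw [wdist_comm hφ (p i₁)]
  omega

theorem exists_near_of_triangle (h : IsLipschitzSection φ B σ) {c : FreeGroup ι} {n₁ n₂ : ℕ}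
    {q : Fin (n₁ + 1) → G} {r : Fin (n₂ + 1) → G}
    (hq : ∀ i : Fin n₁, wdist φ (q i.castSucc) (q i.succ) ≤ 1)
    (hr : ∀ i : Fin n₂, wdist φ (r i.castSucc) (r i.succ) ≤ 1) (hqr : q (Fin.last n₁) = r 0)
    (hc : wnorm (c⁻¹ * σ (r (Fin.last n₂))) + wnorm (c⁻¹ * σ (q 0)) ≤
      wnorm ((σ (r (Fin.last n₂)))⁻¹ * σ (q 0))) :
    ∃ g ∈ Set.range q ∪ Set.range r, wnorm (c⁻¹ * σ g) ≤ B := by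
  by_contra! hfar
  have hfar_q i := hfar (q i) (Or.inl ⟨i, rfl⟩)
  have hfar_r i := hfar (r i) (Or.inr ⟨i, rfl⟩)
  have hne : c⁻¹ * σ (r (Fin.last n₂)) ≠ 1 := by
    rw [Ne, ← wnorm_eq_zero]
    exact (Nat.zero_le B |>.trans_lt (hfar_r _)).ne'
  have same_q := h.head?_eq_of_path hq hfar_q
  have same_r := h.head?_eq_of_path hr hfar_r
  exact head?_ne_of_between hc hne ((same_q.trans (hqr ▸ same_r)).symm)

theorem thinAt (h : IsLipschitzSection φ B σ) {n₁ n₂ n₃ : ℕ} {p : Fin (n₁ + 1) → G}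
    {q : Fin (n₂ + 1) → G} {r : Fin (n₃ + 1) → G} (hp : IsGeodesic φ p) (hq : IsGeodesic φ q)
    (hr : IsGeodesic φ r) (hpq : p (Fin.last n₁) = q 0) (hqr : q (Fin.last n₂) = r 0)
    (hrp : r (Fin.last n₃) = p 0) :
    ThinAt φ (4 * B + 1 : ℕ) p (Set.range q ∪ Set.range r) := by
  intro i
  obtain ⟨j, hj⟩ := h.exists_wdist_treeGeodesic_le hp i
  have hbetween := treeGeodesic_between (σ (p 0)) (σ (p (Fin.last n₁))) j
  set c := treeGeodesic (σ (p 0)) (σ (p (Fin.last n₁))) j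
  rw [← hrp, hpq] at hbetween
  obtain ⟨g, hg, hnear⟩ := h.exists_near_of_triangle hq.1 hr.1 hqr hbetween
  refine ⟨g, hg, Nat.cast_le.2 ?_⟩
  calc wdist φ (p i) g ≤ wdist φ (p i) (φ c) + wdist φ (φ c) g := wdist_triangle h.surjective _ _ _
    _ ≤ (3 * B + 1) + B := Nat.add_le_add hj ((h.wdist_map_le c g).trans hnear)
    _ = 4 * B + 1 := by ring

theorem isHyperbolic (h : IsLipschitzSection φ B σ) : IsHyperbolic φ :=
  ⟨(4 * B + 1 : ℕ), Nat.cast_nonneg _, fun _ _ _ _ _ _ hp hq hr hpq hqr hrp =>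
    ⟨h.thinAt hp hq hr hpq hqr hrp, h.thinAt hq hr hp hqr hrp hpq, h.thinAt hr hp hq hrp hpq hqr⟩⟩

theorem quotient_ker (h : IsLipschitzSection φ B σ) :
    IsLipschitzSection (QuotientGroup.mk' φ.ker) B (σ ∘ QuotientGroup.kerLift φ) where
  map_section q := QuotientGroup.kerLift_injective φ (h.map_section _)
  wnorm_step_le q i := by
    simpa [QuotientGroup.kerLift_mk] using h.wnorm_step_le (QuotientGroup.kerLift φ q) i

end IsLipschitzSection

/-! ### Areas -/

theorem AreaLe.one (R : Set (FreeGroup ι)) : AreaLe R 1 0 :=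
  ⟨[], rfl, by simp, by simp⟩

theorem AreaLe.of_mem {R : Set (FreeGroup ι)} {r : FreeGroup ι} (hr : r ∈ R) : AreaLe R r 1 :=
  ⟨[(1, r)], rfl, by simp [hr], by simp⟩

theorem AreaLe.mul {R : Set (FreeGroup ι)} {u v : FreeGroup ι} {k l : ℕ} (hu : AreaLe R u k)
    (hv : AreaLe R v l) : AreaLe R (u * v) (k + l) := by
  obtain ⟨L, rfl, hL, rfl⟩ := hu
  obtain ⟨L', rfl, hL', rfl⟩ := hv
  exact ⟨L ++ L', by simp, fun p hp => (List.mem_append.1 hp).elim (hL p) (hL' p), by simp⟩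

theorem AreaLe.conj {R : Set (FreeGroup ι)} {u : FreeGroup ι} {k : ℕ} (hu : AreaLe R u k)
    (c : FreeGroup ι) : AreaLe R (c⁻¹ * u * c) k := by
  obtain ⟨L, rfl, hL, rfl⟩ := hu
  refine ⟨L.map fun p => (p.1 * c, p.2), by simp, by simpa only [List.forall_mem_map] using hL, ?_⟩
  rw [← MulAut.conj_symm_apply, map_list_prod, List.map_map, List.map_map]
  simp only [comp_def, MulAut.conj_symm_apply, mul_inv_rev, mul_assoc]

theorem AreaLe.induction {R : Set (FreeGroup ι)} {P : FreeGroup ι → ℕ → Prop} (one : P 1 0)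
    (mul : ∀ c r w k, r ∈ R ∨ r⁻¹ ∈ R → P w k → P (c⁻¹ * r * c * w) (k + 1)) {w : FreeGroup ι}
    {k : ℕ} (h : AreaLe R w k) : P w k := by
  obtain ⟨L, rfl, hL, rfl⟩ := h
  induction L with
  | nil => exact one
  | cons q L ih =>
    rw [List.forall_mem_cons] at hL
    simpa only [List.map_cons, List.prod_cons, List.length_cons] using
      mul q.1 q.2 _ _ hL.1 (ih hL.2)

theorem AreaLe.inv {R : Set (FreeGroup ι)} {u : FreeGroup ι} {k : ℕ} (hu : AreaLe R u k) :
    AreaLe R u⁻¹ k := by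
  refine hu.induction (P := fun w k => AreaLe R w⁻¹ k) (by simpa using AreaLe.one R) ?_
  intro c r w k hr hw
  have hr' : AreaLe R r⁻¹ 1 := ⟨[(1, r⁻¹)], rfl, by simpa using hr.symm, by simp⟩
  simpa [mul_assoc] using hw.mul (hr'.conj c)

theorem AreaLe.mono {R S : Set (FreeGroup ι)} (hRS : R ⊆ S) {u : FreeGroup ι} {k : ℕ}
    (hu : AreaLe R u k) : AreaLe S u k := by
  obtain ⟨L, hk, hL, hprod⟩ := hu
  exact ⟨L, hk, fun q hq => (hL q hq).imp (@hRS _) (@hRS _), hprod⟩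

theorem exists_areaLe_of_mem_normalClosure {R : Set (FreeGroup ι)} {w : FreeGroup ι}
    (hw : w ∈ Subgroup.normalClosure R) : ∃ k, AreaLe R w k := by
  induction hw using Subgroup.closure_induction with
  | mem x hx =>
    obtain ⟨r, hr, c, rfl⟩ := by
      simpa only [Group.mem_conjugatesOfSet_iff, isConj_iff] using hx
    exact ⟨1, by simpa using (AreaLe.of_mem hr).conj c⁻¹⟩
  | one => exact ⟨0, .one R⟩
  | mul x y _ _ hx hy => exact hx.elim fun _ hk => hy.elim fun _ hl => ⟨_, hk.mul hl⟩
  | inv x _ hx => exact hx.imp fun _ hk => hk.inv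

theorem areaLe_area {R : Set (FreeGroup ι)} {w : FreeGroup ι}
    (hw : w ∈ Subgroup.normalClosure R) : AreaLe R w (area R w) :=
  Nat.sInf_mem (exists_areaLe_of_mem_normalClosure hw)

theorem area_le_isoSpec [Finite ι] (φ : FreeGroup ι →* G) {k n : ℕ} (m : ℕ) {w : FreeGroup ι}
    (hw : w ∈ Subgroup.normalClosure (triv φ k)) (hn : wnorm w ≤ n) :
    area (triv φ m) w ≤ isoSpec φ k m n :=
  le_csSup (((finite_setOf_wnorm_le n).subset fun _ h => h.2).image _).bddAbove ⟨w, ⟨hw, hn⟩, rfl⟩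

theorem isoSpec_le {φ : FreeGroup ι →* G} {k m n a : ℕ}
    (h : ∀ w ∈ Subgroup.normalClosure (triv φ k), wnorm w ≤ n → ∃ l ≤ a, AreaLe (triv φ m) w l) :
    isoSpec φ k m n ≤ a := by
  refine csSup_le' ?_
  rintro _ ⟨w, ⟨hw, hn⟩, rfl⟩
  obtain ⟨l, hl, harea⟩ := h w hw hn
  exact (Nat.sInf_le harea).trans hl

namespace IsLipschitzSection

variable {φ : FreeGroup ι →* G} {B : ℕ} {σ : G → FreeGroup ι}

theorem areaLe_section_mul_mk (h : IsLipschitzSection φ B σ) (L : List (ι × Bool)) (g : G) :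
    AreaLe (triv φ (B + 1)) (σ g * FreeGroup.mk L * (σ (g * φ (FreeGroup.mk L)))⁻¹) L.length := by
  induction L generalizing g with
  | nil => simpa [← FreeGroup.one_eq_mk] using AreaLe.one (triv φ (B + 1))
  | cons a L ih =>
    set x := FreeGroup.mk [a]
    have hcons : FreeGroup.mk (a :: L) = x * FreeGroup.mk L := by
      rw [FreeGroup.mul_mk, List.singleton_append]
    have relator : x * (σ (g * φ x))⁻¹ * σ g ∈ triv φ (B + 1) := by
      refine ⟨?_, by simp [h.map_section]⟩
      calc wnorm (x * (σ (g * φ x))⁻¹ * σ g)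
          = wnorm (x * ((σ g)⁻¹ * σ (g * φ x))⁻¹) := by rw [mul_inv_rev, inv_inv, mul_assoc]
        _ ≤ wnorm x + wnorm ((σ g)⁻¹ * σ (g * φ x)) := by
          rw [← wnorm_inv (_ * σ _)]; exact wnorm_mul_le _ _
        _ ≤ B + 1 := by
          rw [add_comm]
          exact Nat.add_le_add (h.wnorm_mk_singleton_step_le g a) (wnorm_mk_le _)
    convert ((AreaLe.of_mem relator).conj (σ g)⁻¹).mul (ih (g * φ x)) using 1
    · rw [hcons, map_mul]; group
    · rw [List.length_cons, add_comm]

theorem areaLe_wnorm (h : IsLipschitzSection φ B σ) {w : FreeGroup ι} (hw : φ w = 1) :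
    AreaLe (triv φ (B + 1)) w (wnorm w) := by
  have := (h.areaLe_section_mul_mk (reducedWord w) 1).conj (σ 1)
  rw [mk_reducedWord, hw, one_mul, length_reducedWord] at this
  convert this using 1
  group

end IsLipschitzSection

/-! ### HNN extensions -/

theorem wnorm_mul_zpow_mul_mul_inv_le {x y z : FreeGroup ι} {M : ℕ} (hx : wnorm x ≤ M)
    (hy : wnorm y ≤ M) (hz : wnorm z ≤ M) (τ : FreeGroup ι) (u : ℤˣ) :
    wnorm (x * τ ^ (u : ℤ) * (y * z⁻¹)) ≤ 3 * M + wnorm τ :=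
  calc wnorm (x * τ ^ (u : ℤ) * (y * z⁻¹)) ≤ wnorm x + wnorm τ + (wnorm y + wnorm z) := by
        rw [← wnorm_zpow_units τ u, ← wnorm_inv z]
        exact (wnorm_mul_le _ _).trans (Nat.add_le_add (wnorm_mul_le _ _) (wnorm_mul_le _ _))
    _ ≤ 3 * M + wnorm τ := by linarith

section HNN

open HNNExtension HNNExtension.NormalWord

variable {A B : Subgroup G} {φ : A ≃* B} {d : TransversalPair G A B}

/-- The lift of the normal word `g₀ t^ε₁ g₁ ⋯ t^εₖ gₖ` to the free group obtained from chosen lifts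
`lam` of the elements of the base group and `τ` of the stable letter. -/
noncomputable def normalWordLift (lam : G → FreeGroup ι) (τ : FreeGroup ι) (w : NormalWord d) :
    FreeGroup ι :=
  lam w.head * (w.toList.map fun x => τ ^ (x.1 : ℤ) * lam x.2).prod

theorem map_normalWordLift {Φ : FreeGroup ι →* HNNExtension G A B φ} {lam : G → FreeGroup ι}
    {τ : FreeGroup ι} (hlam : ∀ g, Φ (lam g) = of g) (hτ : Φ τ = t) (w : NormalWord d) :
    Φ (normalWordLift lam τ w) = w.prod φ := by
  simp only [normalWordLift, ReducedWord.prod, map_mul, hlam, map_list_prod, List.map_map,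
    comp_def, map_zpow, hτ]

theorem normalWordLift_smul (lam : G → FreeGroup ι) (τ : FreeGroup ι) (g : G)
    (w : NormalWord d) :
    normalWordLift lam τ (g • w) =
      lam (g * w.head) * (lam w.head)⁻¹ * normalWordLift lam τ w := by
  simp [normalWordLift, mul_assoc]

theorem normalWordLift_cons (lam : G → FreeGroup ι) (τ : FreeGroup ι) (g : G) (u : ℤˣ)
    (w : NormalWord d) (hw : w.head ∈ d.set u)
    (hu : ∀ u' ∈ Option.map Prod.fst w.toList.head?, w.head ∈ toSubgroup A B u → u = u') :
    normalWordLift lam τ (cons g u w hw hu) =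
      lam g * τ ^ (u : ℤ) * normalWordLift lam τ w := by
  simp [normalWordLift, mul_assoc]

section Bounds

variable {lam : G → FreeGroup ι} {M : ℕ} (hM : ∀ g, wnorm (lam g) ≤ M)
include hM

theorem wnorm_normalWordLift_smul_le (τ : FreeGroup ι) (g : G) (w : NormalWord d) :
    wnorm (normalWordLift lam τ w * (normalWordLift lam τ (g • w))⁻¹) ≤ 2 * M := by
  have hdiff : normalWordLift lam τ w * (normalWordLift lam τ (g • w))⁻¹ =
      lam w.head * (lam (g * w.head))⁻¹ := by
    rw [normalWordLift_smul]; group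
  calc wnorm (normalWordLift lam τ w * (normalWordLift lam τ (g • w))⁻¹)
      ≤ wnorm (lam w.head) + wnorm (lam (g * w.head)) := by
        rw [hdiff, ← wnorm_inv (lam (g * w.head))]; exact wnorm_mul_le _ _
    _ ≤ 2 * M := by linarith [hM w.head, hM (g * w.head)]

theorem wnorm_normalWordLift_unitsSMul_le (τ : FreeGroup ι) (u : ℤˣ) (w : NormalWord d) :
    wnorm (normalWordLift lam τ w * (normalWordLift lam τ (unitsSMul φ u w))⁻¹) ≤
      3 * M + wnorm τ := by
  classical
  rw [unitsSMul]
  split_ifs with hcancel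
  · cases w using consRecOn with
    | ofGroup => simp [Cancels] at hcancel
    | cons g u' w hw hu' ih =>
      simp only [unitsSMulWithCancel, consRecOn_cons]
      rw [normalWordLift_smul, normalWordLift_cons]
      set x := (toSubgroupEquiv φ u ⟨g, hcancel.1⟩ : G)
      convert wnorm_mul_zpow_mul_mul_inv_le (hM g) (hM w.head) (hM (x * w.head)) τ u' using 2
      group
  · rw [normalWordLift_cons, normalWordLift_smul, ← wnorm_inv]
    set x := ((unitsSMulGroup φ d u w.head).1 : G)
    set y := ((unitsSMulGroup φ d u w.head).2 : G) * w.head⁻¹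
    convert wnorm_mul_zpow_mul_mul_inv_le (hM x) (hM (y * w.head)) (hM w.head) τ u using 2
    group

end Bounds

theorem exists_isLipschitzSection_of_hnnExtension [Finite G]
    {Φ : FreeGroup ι →* HNNExtension G A B φ} (hΦ : Surjective Φ)
    (hgen : ∀ i, (∃ g, Φ (FreeGroup.of i) = of g) ∨ Φ (FreeGroup.of i) = t) :
    ∃ C σ, IsLipschitzSection Φ C σ := by
  obtain ⟨d⟩ := TransversalPair.nonempty G A B
  choose lam hlam using fun g : G => hΦ (of g)
  obtain ⟨τ, hτ⟩ := hΦ t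
  obtain ⟨M, hM⟩ := (Set.finite_range fun g => wnorm (lam g)).bddAbove
  rw [mem_upperBounds, Set.forall_mem_range] at hM
  -- Generators act on the right, letters of normal words on the left: hence the inverses.
  let σ (g : HNNExtension G A B φ) := (normalWordLift lam τ (NormalWord.equiv φ d g⁻¹))⁻¹
  refine ⟨3 * M + wnorm τ, σ, ⟨fun g => ?_, fun g i => ?_⟩⟩
  · have : (NormalWord.equiv φ d g⁻¹).prod φ = g⁻¹ := (NormalWord.equiv φ d).symm_apply_apply _
    rw [map_inv, map_normalWordLift hlam hτ, this, inv_inv]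
  · have equiv_mul (e x : HNNExtension G A B φ) :
        NormalWord.equiv φ d (e * x) = e • NormalWord.equiv φ d x :=
      mul_smul e x (empty : NormalWord d)
    simp only [σ, inv_inv, mul_inv_rev, equiv_mul]
    rcases hgen i with ⟨g', hg'⟩ | hi
    · rw [hg', ← map_inv, of_smul_eq_smul]
      exact (wnorm_normalWordLift_smul_le hM τ _ _).trans (by omega)
    · have : (t : HNNExtension G A B φ)⁻¹ = t ^ ((-1 : ℤˣ) : ℤ) := by simp
      rw [hi, this, t_pow_smul_eq_unitsSMul]
      exact wnorm_normalWordLift_unitsSMul_le hM τ _ _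

theorem length_equiv_prod (d : TransversalPair G A B) (w : ReducedWord G A B) :
    (NormalWord.equiv φ d (w.prod φ)).toList.length = w.toList.length := by
  have hprod : (NormalWord.equiv φ d (w.prod φ)).prod φ = w.prod φ :=
    (NormalWord.equiv φ d).symm_apply_apply _
  simpa using congrArg List.length (ReducedWord.map_fst_eq_and_of_prod_eq φ hprod).1

/-- Conjugation by `t^(-ε) y h⁻¹` turns `h t^ε₁ g₁ ⋯ t^ε g` into
`t^(-ε) y t^ε₁ g₁ ⋯ t^ε (g h y⁻¹) t^ε`, which is reduced if `y ∉ toSubgroup A B (-ε)`. -/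
theorem exists_longer_reducedWord (hA : A ≠ ⊤) (hB : B ≠ ⊤)
    {K : Subgroup (HNNExtension G A B φ)} (hK : K.Normal) {w : ReducedWord G A B}
    (hw : w.prod φ ∈ K) (hne : w.toList ≠ []) :
    ∃ w' : ReducedWord G A B, w'.prod φ ∈ K ∧ w.toList.length < w'.toList.length := by
  obtain ⟨h, L, hL⟩ := w
  obtain ⟨L, ⟨ε, g⟩, rfl⟩ := (List.eq_nil_or_concat' L).resolve_left hne
  obtain ⟨y, hy⟩ : ∃ y, y ∉ toSubgroup A B (-ε) := by
    rcases Int.units_eq_one_or ε with rfl | rfl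
    · simpa using mt (Subgroup.eq_top_iff' B).2 hB
    · simpa using mt (Subgroup.eq_top_iff' A).2 hA
  have chain : ((-ε, y) :: (L ++ [(ε, g * h * y⁻¹), (ε, 1)])).IsChain
      fun a b => a.2 ∈ toSubgroup A B a.1 → a.1 = b.1 := by
    rw [List.isChain_append] at hL
    refine List.isChain_cons.2 ⟨fun _ _ hy' => absurd hy' hy,
      List.isChain_append.2 ⟨hL.1, by simp, fun a ha b hb => ?_⟩⟩
    obtain rfl : (ε, g * h * y⁻¹) = b := by simpa using hb
    exact hL.2.2 a ha (ε, g) rfl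
  refine ⟨⟨1, _, chain⟩, ?_, by simp⟩
  convert hK.conj_mem _ hw (t ^ (-ε : ℤ) * of (y * h⁻¹)) using 1
  simp [ReducedWord.prod, mul_assoc]

theorem le_range_of_of_finite_normal (hA : A ≠ ⊤) (hB : B ≠ ⊤)
    {K : Subgroup (HNNExtension G A B φ)} (hK : K.Normal)
    (hfin : (K : Set (HNNExtension G A B φ)).Finite) :
    K ≤ (of : G →* HNNExtension G A B φ).range := by
  obtain ⟨d⟩ := TransversalPair.nonempty G A B
  let ℓ (y : HNNExtension G A B φ) := (NormalWord.equiv φ d y).toList.length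
  have prod_equiv (y) : (NormalWord.equiv φ d y).prod φ = y :=
    (NormalWord.equiv φ d).symm_apply_apply _
  obtain ⟨y, hyK, hmax⟩ := Set.exists_max_image _ ℓ hfin ⟨1, K.one_mem⟩
  have length_zero : ℓ y = 0 := by
    by_contra hne
    obtain ⟨w, hwK, hlt⟩ := exists_longer_reducedWord hA hB hK
      (w := (NormalWord.equiv φ d y).toReducedWord) (by rwa [prod_equiv])
      (mt List.length_eq_zero_iff.2 hne)
    exact (hmax _ hwK).not_gt (hlt.trans_eq (length_equiv_prod d w).symm)
  intro x hx
  have hnil : (NormalWord.equiv φ d x).toList = [] :=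
    List.length_eq_zero_iff.1 (Nat.le_zero.1 (length_zero ▸ hmax x hx))
  refine ⟨(NormalWord.equiv φ d x).head, Eq.trans ?_ (prod_equiv x)⟩
  simp [ReducedWord.prod, hnil]

end HNN

/-! ### Markings supported on two generators -/

section PairMarking

variable [DecidableEq ι] {x₀ x₁ : ι}

/-- The marking of a group by a pair of its elements: `x₀` is sent to `a`, `x₁` to `t`, and all
other generators to `1`. -/
def pairMarking (x₀ x₁ : ι) (a t : G) : FreeGroup ι →* G :=
  FreeGroup.lift fun i => if i = x₀ then a else if i = x₁ then t else 1

@[simp]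
theorem pairMarking_of_fst (x₀ x₁ : ι) (a t : G) : pairMarking x₀ x₁ a t (.of x₀) = a := by
  simp [pairMarking]

theorem pairMarking_of_snd (hx : x₀ ≠ x₁) (a t : G) : pairMarking x₀ x₁ a t (.of x₁) = t := by
  simp [pairMarking, hx.symm]

theorem pairMarking_of_cases (x₀ x₁ : ι) (a t : G) (i : ι) :
    pairMarking x₀ x₁ a t (.of i) = a ∨ pairMarking x₀ x₁ a t (.of i) = t ∨
      pairMarking x₀ x₁ a t (.of i) = 1 := by
  simp only [pairMarking, FreeGroup.lift_apply_of]
  split_ifs <;> simp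

theorem pairMarking_mk_singleton_cases (x₀ x₁ : ι) (a t : G) (x : ι × Bool) :
    pairMarking x₀ x₁ a t (.mk [x]) ∈ ({a, a⁻¹, t, t⁻¹, 1} : Set G) := by
  obtain ⟨i, _ | _⟩ := x
  · have : FreeGroup.mk [(i, false)] = (FreeGroup.of i)⁻¹ := rfl
    rcases pairMarking_of_cases x₀ x₁ a t i with h | h | h <;> simp [this, h]
  · have : FreeGroup.mk [(i, true)] = FreeGroup.of i := rfl
    rcases pairMarking_of_cases x₀ x₁ a t i with h | h | h <;> simp [this, h]

theorem map_pairMarking {H : Type*} [Group H] (x₀ x₁ : ι) (a t : G) (f : G →* H)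
    (w : FreeGroup ι) : f (pairMarking x₀ x₁ a t w) = pairMarking x₀ x₁ (f a) (f t) w := by
  suffices f.comp (pairMarking x₀ x₁ a t) = pairMarking x₀ x₁ (f a) (f t) from
    DFunLike.congr_fun this w
  ext i
  simp only [pairMarking, MonoidHom.comp_apply, FreeGroup.lift_apply_of]
  split_ifs <;> simp

end PairMarking

/-! ### HNN extensions of subgroups along an inner automorphism -/

/-- The largest subgroup of `H` which conjugation by `t` maps into `H`. -/
def conjDomain (t : G) (H : Subgroup G) : Subgroup H :=
  (H.comap (MulAut.conj t).toMonoidHom).subgroupOf H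

theorem mem_conjDomain {t : G} {H : Subgroup G} {g : H} :
    g ∈ conjDomain t H ↔ t * g * t⁻¹ ∈ H := by
  simp [conjDomain, Subgroup.mem_subgroupOf]

/-- Conjugation by `t` as an isomorphism between its domain and its range in `H`. -/
def conjDomainEquiv (t : G) (H : Subgroup G) : conjDomain t H ≃* conjDomain t⁻¹ H where
  toFun g := ⟨⟨t * g * t⁻¹, mem_conjDomain.1 g.2⟩, by simp [mem_conjDomain, mul_assoc]⟩
  invFun g := ⟨⟨t⁻¹ * g * t, by simpa using mem_conjDomain.1 g.2⟩, by
    simp [mem_conjDomain, mul_assoc]⟩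
  left_inv g := by ext; simp [mul_assoc]
  right_inv g := by ext; simp [mul_assoc]
  map_mul' g h := by ext; simp [mul_assoc]

theorem coe_conjDomainEquiv (t : G) (H : Subgroup G) (g : conjDomain t H) :
    ((conjDomainEquiv t H g : H) : G) = t * g * t⁻¹ := rfl

/-- The HNN extension of `H` whose stable letter acts as conjugation by `t`, wherever this makes
sense within `H`. -/
abbrev ConjHNN (t : G) (H : Subgroup G) : Type _ :=
  HNNExtension H (conjDomain t H) (conjDomain t⁻¹ H) (conjDomainEquiv t H)

namespace ConjHNN

/-- The homomorphism to the ambient group sending the stable letter to `t`. -/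
def toAmbient (t : G) (H : Subgroup G) : ConjHNN t H →* G :=
  HNNExtension.lift H.subtype t fun g => by simp [coe_conjDomainEquiv]

@[simp]
theorem toAmbient_of (t : G) (H : Subgroup G) (g : H) : toAmbient t H (HNNExtension.of g) = g :=
  HNNExtension.lift_of _ _ _ g

@[simp]
theorem toAmbient_t (t : G) (H : Subgroup G) : toAmbient t H HNNExtension.t = t :=
  HNNExtension.lift_t _ _ _

end ConjHNN

/-- The conjugate `tʲ a t⁻ʲ`. -/
def conjZPow (t a : G) (j : ℤ) : G := t ^ j * a * (t ^ j)⁻¹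

theorem conjZPow_add_one (t a : G) (j : ℤ) :
    conjZPow t a (j + 1) = t * conjZPow t a j * t⁻¹ := by
  rw [conjZPow, conjZPow, zpow_add_one]
  group

/-- The subgroup generated by the conjugates of `a` by `1, t, …, tᴺ`. -/
def conjSpan (t a : G) (N : ℕ) : Subgroup G :=
  Subgroup.closure ((fun j : ℕ => conjZPow t a j) '' Set.Iic N)

theorem conjZPow_mem_conjSpan (t a : G) {N j : ℕ} (hj : j ≤ N) :
    conjZPow t a j ∈ conjSpan t a N :=
  Subgroup.subset_closure ⟨j, hj, rfl⟩

theorem self_mem_conjSpan (t a : G) (N : ℕ) : a ∈ conjSpan t a N := by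
  simpa [conjZPow] using conjZPow_mem_conjSpan t a (Nat.zero_le N)

theorem of_conjZPow (t a : G) {N j : ℕ} (hj : j ≤ N) :
    (HNNExtension.of ⟨conjZPow t a j, conjZPow_mem_conjSpan t a hj⟩ : ConjHNN t (conjSpan t a N)) =
      HNNExtension.t ^ j * HNNExtension.of ⟨a, self_mem_conjSpan t a N⟩ *
        (HNNExtension.t ^ j)⁻¹ := by
  induction j with
  | zero => simp [conjZPow]
  | succ j ih =>
    have hmem : (⟨conjZPow t a j, conjZPow_mem_conjSpan t a (by omega)⟩ : conjSpan t a N) ∈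
        conjDomain t (conjSpan t a N) := by
      rw [mem_conjDomain, ← conjZPow_add_one]
      exact_mod_cast conjZPow_mem_conjSpan t a hj
    have hequiv : (conjDomainEquiv t (conjSpan t a N) ⟨_, hmem⟩ : conjSpan t a N) =
        ⟨conjZPow t a (j + 1 : ℕ), conjZPow_mem_conjSpan t a hj⟩ := by
      ext
      rw [coe_conjDomainEquiv]
      push_cast
      rw [conjZPow_add_one]
    rw [← hequiv, HNNExtension.equiv_eq_conj, ih (by omega), pow_succ']
    group

section HNNMarking

variable [DecidableEq ι] {x₀ x₁ : ι}

/-- The marking of the HNN extension of `conjSpan t a N` by `a` and the stable letter. -/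
def hnnMarking (x₀ x₁ : ι) (t a : G) (N : ℕ) : FreeGroup ι →* ConjHNN t (conjSpan t a N) :=
  pairMarking x₀ x₁ (HNNExtension.of ⟨a, self_mem_conjSpan t a N⟩) HNNExtension.t

theorem toAmbient_hnnMarking (x₀ x₁ : ι) (t a : G) (N : ℕ) (w : FreeGroup ι) :
    ConjHNN.toAmbient t _ (hnnMarking x₀ x₁ t a N w) = pairMarking x₀ x₁ a t w := by
  simp [hnnMarking, map_pairMarking]

theorem ker_hnnMarking_le (x₀ x₁ : ι) (t a : G) (N : ℕ) :
    (hnnMarking x₀ x₁ t a N).ker ≤ (pairMarking x₀ x₁ a t).ker := fun w hw => by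
  rw [MonoidHom.mem_ker, ← toAmbient_hnnMarking x₀ x₁ t a N, hw, map_one]

theorem hnnMarking_surjective (hx : x₀ ≠ x₁) (t a : G) (N : ℕ) :
    Surjective (hnnMarking x₀ x₁ t a N) := by
  have ht : hnnMarking x₀ x₁ t a N (.of x₁) = HNNExtension.t := pairMarking_of_snd hx _ _
  have ha : hnnMarking x₀ x₁ t a N (.of x₀) = HNNExtension.of ⟨a, self_mem_conjSpan t a N⟩ :=
    pairMarking_of_fst ..
  rw [← MonoidHom.range_eq_top, Subgroup.eq_top_iff']
  intro x
  induction x using HNNExtension.induction_on with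
  | of g =>
    let S := (hnnMarking x₀ x₁ t a N).range.comap HNNExtension.of
    change g ∈ S
    obtain ⟨g, hg⟩ := g
    induction hg using Subgroup.closure_induction with
    | mem g hg =>
      obtain ⟨j, hj, rfl⟩ := hg
      refine ⟨.of x₁ ^ j * .of x₀ * (.of x₁ ^ j)⁻¹, ?_⟩
      simp only [map_mul, map_inv, map_pow, ha, ht]
      exact (of_conjZPow t a hj).symm
    | one => exact one_mem S
    | mul g h _ _ hg hh => exact S.mul_mem hg hh
    | inv g _ hg => exact S.inv_mem hg
  | t => exact ⟨_, ht⟩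
  | mul x y hx hy => exact mul_mem hx hy
  | inv x hx => exact inv_mem hx

theorem exists_isLipschitzSection_hnnMarking (hx : x₀ ≠ x₁) (t a : G) (N : ℕ)
    [Finite (conjSpan t a N)] : ∃ C σ, IsLipschitzSection (hnnMarking x₀ x₁ t a N) C σ := by
  refine exists_isLipschitzSection_of_hnnExtension (hnnMarking_surjective hx t a N) fun i => ?_
  rcases pairMarking_of_cases x₀ x₁
    (HNNExtension.of ⟨a, self_mem_conjSpan t a N⟩ : ConjHNN t (conjSpan t a N)) HNNExtension.t i
    with h | h | h
  · exact .inl ⟨_, h⟩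
  · exact .inr h
  · exact .inl ⟨1, h.trans (map_one _).symm⟩

theorem exists_t_pow_mul_hnnMarking_mk_singleton (x₀ x₁ : ι) (t a : G) {N j : ℕ} (hj : 0 < j)
    (hjN : j ≤ N) (x : ι × Bool) :
    ∃ (j' : ℕ) (g : conjSpan t a N), j ≤ j' + 1 ∧ j' ≤ j + 1 ∧
      HNNExtension.t ^ j * hnnMarking x₀ x₁ t a N (.mk [x]) =
        HNNExtension.of g * HNNExtension.t ^ j' := by
  have hconj := of_conjZPow t a hjN
  set g : conjSpan t a N := ⟨conjZPow t a j, conjZPow_mem_conjSpan t a hjN⟩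
  rcases pairMarking_mk_singleton_cases x₀ x₁
    (HNNExtension.of ⟨a, self_mem_conjSpan t a N⟩ : ConjHNN t (conjSpan t a N)) HNNExtension.t x
    with h | h | h | h | h <;> rw [hnnMarking, h]
  · exact ⟨j, g, by omega, by omega, by rw [hconj, inv_mul_cancel_right]⟩
  · exact ⟨j, g⁻¹, by omega, by omega, by rw [map_inv, hconj]; group⟩
  · exact ⟨j + 1, 1, by omega, by omega, by rw [map_one, one_mul, pow_succ]⟩
  · refine ⟨j - 1, 1, by omega, by omega, ?_⟩
    rw [map_one, one_mul, mul_inv_eq_iff_eq_mul, pow_sub_one_mul hj.ne']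
  · exact ⟨j, 1, by omega, by omega, by rw [map_one, one_mul, mul_one]⟩

/-- Conjugation by `tᴸ` keeps a word of length at most `L` away from negative powers of `t`, so that
all the conjugates `tʲ a t⁻ʲ` collected from it lie in the base group. -/
theorem exists_t_pow_mul_hnnMarking_mk (x₀ x₁ : ι) (t a : G) {L : ℕ} {l : List (ι × Bool)}
    (hl : l.length ≤ L) :
    ∃ (j : ℕ) (g : conjSpan t a (2 * L)), L ≤ j + l.length ∧ j ≤ L + l.length ∧
      HNNExtension.t ^ L * hnnMarking x₀ x₁ t a (2 * L) (.mk l) =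
        HNNExtension.of g * HNNExtension.t ^ j := by
  induction l using List.reverseRecOn with
  | nil => exact ⟨L, 1, by simp, by simp, by simp [← FreeGroup.one_eq_mk]⟩
  | append_singleton l x ih =>
    simp only [List.length_append, List.length_singleton] at hl ⊢
    obtain ⟨j, g, hLj, hjL, hg⟩ := ih (by omega)
    obtain ⟨j', g', hjj', hj'j, hg'⟩ := exists_t_pow_mul_hnnMarking_mk_singleton x₀ x₁ t a
      (show 0 < j by omega) (show j ≤ 2 * L by omega) x
    refine ⟨j', g * g', by omega, by omega, ?_⟩
    rw [← FreeGroup.mul_mk, map_mul, ← mul_assoc, hg, mul_assoc, hg', map_mul, mul_assoc]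

end HNNMarking

/-! ### Level actions and their approximation by HNN extensions of finite groups -/

/-- Two permutations `t` and `a` of a set with a level function having finite fibres over bounded
sets: `t` raises levels by `1`, while `a` preserves them and moves only points of level at most `R`
in absolute value. On the distinguished invariant set `β`, the points moved by `a` are exactly
those of level `0`. -/
structure IsLevelAction {Ω : Type*} (lev : Ω → ℤ) (t a : Equiv.Perm Ω) (R : ℕ) (β : Set Ω) :
    Prop where
  lev_shift : ∀ ω, lev (t ω) = lev ω + 1
  lev_apply : ∀ ω, lev (a ω) = lev ω
  apply_eq_of_lt : ∀ ω, (R : ℤ) < |lev ω| → a ω = ω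
  finite_level_le : ∀ l : ℤ, {ω | |lev ω| ≤ l}.Finite
  exists_mem : ∃ ω ∈ β, lev ω = 0
  shift_mem_iff : ∀ ω, t ω ∈ β ↔ ω ∈ β
  apply_mem_iff : ∀ ω, a ω ∈ β ↔ ω ∈ β
  apply_eq_iff : ∀ ω ∈ β, a ω = ω ↔ lev ω ≠ 0

theorem exists_pow_commute_pow_of_index_zpowers_ne_zero {g : G}
    (hg : (Subgroup.zpowers g).index ≠ 0) (x y : G) :
    ∃ m > 0, ∃ n > 0, Commute (x ^ m) (y ^ n) := by
  obtain ⟨m, hm, -, i, hi⟩ := Subgroup.exists_pow_mem_of_index_ne_zero hg x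
  obtain ⟨n, hn, -, j, hj⟩ := Subgroup.exists_pow_mem_of_index_ne_zero hg y
  exact ⟨m, hm, n, hn, hi ▸ hj ▸ Commute.zpow_zpow_self g i j⟩

theorem conjZPow_apply {Ω : Type*} (t a : Equiv.Perm Ω) (j : ℤ) (ω : Ω) :
    conjZPow t a j ω = (t ^ j) (a ((t ^ (-j)) ω)) := by
  simp [conjZPow]

namespace IsLevelAction

variable {Ω : Type*} {lev : Ω → ℤ} {t a : Equiv.Perm Ω} {R : ℕ} {β : Set Ω}

theorem lev_zpow (h : IsLevelAction lev t a R β) (j : ℤ) (ω : Ω) :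
    lev ((t ^ j) ω) = lev ω + j := by
  induction j using Int.induction_on with
  | zero => simp
  | succ j ih =>
    rw [add_comm, zpow_one_add, Equiv.Perm.mul_apply, h.lev_shift, ih, add_right_comm, add_assoc]
  | pred j ih =>
    have := h.lev_shift ((t ^ (-(j : ℤ) - 1)) ω)
    rw [← Equiv.Perm.mul_apply, ← zpow_one_add, add_sub_cancel, ih] at this
    omega

theorem zpow_mem_iff (h : IsLevelAction lev t a R β) (j : ℤ) (ω : Ω) :
    (t ^ j) ω ∈ β ↔ ω ∈ β := by
  induction j using Int.induction_on with
  | zero => simp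
  | succ j ih => rw [add_comm, zpow_one_add, Equiv.Perm.mul_apply, h.shift_mem_iff, ih]
  | pred j ih =>
    rw [← h.shift_mem_iff, ← Equiv.Perm.mul_apply, ← zpow_one_add, add_sub_cancel, ih]

theorem conjSpan_le_fixingSubgroup (h : IsLevelAction lev t a R β) (N : ℕ) :
    conjSpan t a N ≤ fixingSubgroup (Equiv.Perm Ω) {ω | ((R + N : ℕ) : ℤ) < |lev ω|} := by
  rw [conjSpan, Subgroup.closure_le]
  rintro _ ⟨j, hj, rfl⟩
  refine (mem_fixingSubgroup_iff _).2 fun ω hω => ?_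
  have hfix : a ((t ^ (-(j : ℤ))) ω) = (t ^ (-(j : ℤ))) ω := h.apply_eq_of_lt _ <| by
    rw [Set.mem_Iic] at hj
    rw [Set.mem_ofPred_eq, lt_abs] at hω
    rw [h.lev_zpow, lt_abs]
    omega
  rw [Equiv.Perm.smul_def, conjZPow_apply, hfix, ← Equiv.Perm.mul_apply, ← zpow_add,
    add_neg_cancel, zpow_zero, Equiv.Perm.one_apply]

theorem apply_eq_of_mem_conjSpan (h : IsLevelAction lev t a R β) {N : ℕ} {g : Equiv.Perm Ω}
    (hg : g ∈ conjSpan t a N) {ω : Ω} (hω : ((R + N : ℕ) : ℤ) < |lev ω|) : g ω = ω :=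
  (mem_fixingSubgroup_iff _).1 (h.conjSpan_le_fixingSubgroup N hg) ω hω

theorem conjZPow_apply_eq_iff (h : IsLevelAction lev t a R β) (j : ℤ) {ω : Ω} (hω : ω ∈ β) :
    conjZPow t a j ω = ω ↔ lev ω ≠ j := by
  rw [conjZPow_apply, ← Equiv.Perm.eq_inv_iff_eq, ← zpow_neg,
    h.apply_eq_iff _ ((h.zpow_mem_iff _ _).2 hω), h.lev_zpow, ← sub_eq_add_neg, sub_ne_zero]

theorem conjZPow_notMem_conjSpan (h : IsLevelAction lev t a R β) {N : ℕ} {i : ℤ}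
    (hi : ∀ j ≤ N, (j : ℤ) ≠ i) : conjZPow t a i ∉ conjSpan t a N := by
  intro hmem
  obtain ⟨ω, hω, hlev⟩ := h.exists_mem
  have hmem_i : (t ^ i) ω ∈ β := (h.zpow_mem_iff _ _).2 hω
  have hlev_i : lev ((t ^ i) ω) = i := by rw [h.lev_zpow, hlev, zero_add]
  have hle : conjSpan t a N ≤ MulAction.stabilizer (Equiv.Perm Ω) ((t ^ i) ω) := by
    rw [conjSpan, Subgroup.closure_le]
    rintro _ ⟨j, hj, rfl⟩
    exact (h.conjZPow_apply_eq_iff j hmem_i).2 (by rw [hlev_i]; exact (hi j hj).symm)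
  exact (h.conjZPow_apply_eq_iff i hmem_i).1 (hle hmem) hlev_i

theorem conjDomain_ne_top (h : IsLevelAction lev t a R β) (N : ℕ) :
    conjDomain t (conjSpan t a N) ≠ ⊤ := by
  intro htop
  have hmem : ⟨_, conjZPow_mem_conjSpan t a (le_refl N)⟩ ∈ conjDomain t (conjSpan t a N) :=
    htop ▸ Subgroup.mem_top _
  rw [mem_conjDomain, ← conjZPow_add_one] at hmem
  exact h.conjZPow_notMem_conjSpan (fun j hj => by omega) hmem

theorem conjDomain_inv_ne_top (h : IsLevelAction lev t a R β) (N : ℕ) :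
    conjDomain t⁻¹ (conjSpan t a N) ≠ ⊤ := by
  intro htop
  have hmem : ⟨_, self_mem_conjSpan t a N⟩ ∈ conjDomain t⁻¹ (conjSpan t a N) :=
    htop ▸ Subgroup.mem_top _
  have hconj : t⁻¹ * a * t⁻¹⁻¹ = conjZPow t a (-1) := by simp [conjZPow]
  rw [mem_conjDomain, hconj] at hmem
  exact h.conjZPow_notMem_conjSpan (fun j _ => by omega) hmem

theorem finite_conjSpan (h : IsLevelAction lev t a R β) (N : ℕ) : Finite (conjSpan t a N) := by
  classical
  let p (ω : Ω) : Prop := |lev ω| ≤ ((R + N : ℕ) : ℤ)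
  have : Finite {ω // p ω} := h.finite_level_le _
  have : Finite {g : Equiv.Perm Ω // ∀ ω, ¬p ω → g ω = ω} :=
    .of_equiv _ (Equiv.Perm.subtypeEquivSubtypePerm p)
  let f (g : conjSpan t a N) : {g : Equiv.Perm Ω // ∀ ω, ¬p ω → g ω = ω} :=
    ⟨g, fun _ hω => h.apply_eq_of_mem_conjSpan g.2 (not_le.1 hω)⟩
  exact .of_injective f fun _ _ hf => Subtype.ext (congrArg (fun g => g.1) hf)

theorem eq_bot_of_finite_normal (h : IsLevelAction lev t a R β) (N : ℕ)
    {K : Subgroup (ConjHNN t (conjSpan t a N))} (hK : K.Normal)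
    (hfin : (K : Set (ConjHNN t (conjSpan t a N))).Finite) : K = ⊥ := by
  have hbase := le_range_of_of_finite_normal (h.conjDomain_ne_top N) (h.conjDomain_inv_ne_top N)
    hK hfin
  rw [Subgroup.eq_bot_iff_forall]
  intro x hx
  obtain ⟨g, rfl⟩ := hbase hx
  -- The conjugate of `g` by `tᶜ` also lies in `conjSpan t a N`, but it acts on disjoint levels.
  set c : ℕ := 2 * (R + N) + 1
  obtain ⟨g', hg'⟩ := hbase (hK.conj_mem _ hx (HNNExtension.t ^ c))
  have hconj : (g' : Equiv.Perm Ω) = t ^ c * g * (t ^ c)⁻¹ := by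
    simpa using congrArg (ConjHNN.toAmbient t _) hg'
  have hg : g = 1 := by
    ext ω
    by_cases hω : ((R + N : ℕ) : ℤ) < |lev ω|
    · exact h.apply_eq_of_mem_conjSpan g.2 hω
    · have hfix := h.apply_eq_of_mem_conjSpan g'.2 (ω := (t ^ c) ω) <| by
        rw [← zpow_natCast, h.lev_zpow, lt_abs]
        rw [not_lt, abs_le] at hω
        omega
      simpa [hconj] using hfix
  rw [hg, map_one]

theorem mul_pow_apply (h : IsLevelAction lev t a R β) (n : ℕ) {ω : Ω} (hω : ω ∈ β)
    (hlev : 0 < lev ω) : ((t * a) ^ n) ω = (t ^ n) ω := by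
  induction n with
  | zero => rfl
  | succ n ih =>
    have hfix : a ((t ^ n) ω) = (t ^ n) ω := by
      rw [← zpow_natCast, h.apply_eq_iff _ ((h.zpow_mem_iff _ _).2 hω), h.lev_zpow]
      omega
    rw [pow_succ', Equiv.Perm.mul_apply, ih, Equiv.Perm.mul_apply, hfix, pow_succ',
      Equiv.Perm.mul_apply]

theorem not_commute_pow_mul_pow (h : IsLevelAction lev t a R β) {m n : ℕ} (hm : 0 < m)
    (hn : 0 < n) : ¬Commute (t ^ m) ((t * a) ^ n) := by
  intro hcomm
  obtain ⟨n, rfl⟩ := Nat.exists_eq_add_one.2 hn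
  obtain ⟨ω, hω, hlev⟩ := h.exists_mem
  have hleft : ((t * a) ^ (n + 1)) ω = (t ^ (n + 1)) (a ω) := by
    rw [pow_succ, Equiv.Perm.mul_apply, Equiv.Perm.mul_apply,
      h.mul_pow_apply n ((h.shift_mem_iff _).2 ((h.apply_mem_iff _).2 hω)), pow_succ,
      Equiv.Perm.mul_apply]
    rw [h.lev_shift, h.lev_apply]
    omega
  have hright : ((t * a) ^ (n + 1)) ((t ^ m) ω) = (t ^ (n + 1)) ((t ^ m) ω) := by
    rw [← zpow_natCast t m]
    exact h.mul_pow_apply _ ((h.zpow_mem_iff _ _).2 hω) (by rw [h.lev_zpow]; omega)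
  have hpow : (t ^ (n + 1)) ((t ^ m) (a ω)) = (t ^ (n + 1)) ((t ^ m) ω) := by
    rw [← hright, ← Equiv.Perm.mul_apply, ← Equiv.Perm.mul_apply ((t * a) ^ _), ← hcomm.eq,
      Equiv.Perm.mul_apply (t ^ m), hleft, ← Equiv.Perm.mul_apply, ← Equiv.Perm.mul_apply,
      (Commute.pow_pow_self t _ _).eq, Equiv.Perm.mul_apply _ a]
  exact (h.apply_eq_iff ω hω).1 ((t ^ m).injective ((t ^ (n + 1)).injective hpow)) hlev

section Marking

variable [DecidableEq ι] {x₀ x₁ : ι}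

theorem hnnMarking_eq_one (h : IsLevelAction lev t a R β) {L : ℕ} {w : FreeGroup ι}
    (hw : wnorm w ≤ L) (hw1 : pairMarking x₀ x₁ a t w = 1) :
    hnnMarking x₀ x₁ t a (2 * L) w = 1 := by
  obtain ⟨j, g, -, -, hg⟩ := exists_t_pow_mul_hnnMarking_mk x₀ x₁ t a
    ((length_reducedWord w).trans_le hw)
  rw [mk_reducedWord] at hg
  have hamb : t ^ L = g * t ^ j := by
    simpa [toAmbient_hnnMarking, hw1] using congrArg (ConjHNN.toAmbient t _) hg
  have hLj : L = j := by
    obtain ⟨ω, -, hω⟩ := h.exists_mem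
    set K : ℕ := R + 2 * L + 1
    have hfix := h.apply_eq_of_mem_conjSpan g.2 (ω := (t ^ (j : ℤ)) ((t ^ (K : ℤ)) ω)) <| by
      rw [h.lev_zpow, h.lev_zpow, hω, lt_abs]
      omega
    have := congrArg lev (DFunLike.congr_fun hamb ((t ^ (K : ℤ)) ω))
    rw [Equiv.Perm.mul_apply, ← zpow_natCast t L, ← zpow_natCast t j, hfix] at this
    simp only [h.lev_zpow] at this
    omega
  subst hLj
  obtain rfl : g = 1 := Subtype.ext (mul_eq_right.1 hamb.symm)
  rwa [map_one, one_mul, mul_eq_left] at hg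

theorem not_exists_index_zpowers_ne_zero (h : IsLevelAction lev t a R β) (hx : x₀ ≠ x₁)
    {K : Subgroup (FreeGroup ι)} [K.Normal] (hK : K ≤ (pairMarking x₀ x₁ a t).ker) :
    ¬∃ g : FreeGroup ι ⧸ K, (Subgroup.zpowers g).index ≠ 0 := by
  rintro ⟨g, hg⟩
  obtain ⟨m, hm, n, hn, hcomm⟩ := exists_pow_commute_pow_of_index_zpowers_ne_zero hg
    (FreeGroup.of x₁ : FreeGroup ι ⧸ K) (FreeGroup.of x₁ * FreeGroup.of x₀ : FreeGroup ι)
  refine h.not_commute_pow_mul_pow hm hn ?_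
  have := hcomm.map (QuotientGroup.lift K (pairMarking x₀ x₁ a t) hK)
  simpa only [map_pow, QuotientGroup.lift_mk, map_mul, pairMarking_of_fst,
    pairMarking_of_snd hx] using this

theorem isHyperbolic_mk'_ker_hnnMarking (h : IsLevelAction lev t a R β) (hx : x₀ ≠ x₁) (N : ℕ) :
    IsHyperbolic (QuotientGroup.mk' (hnnMarking x₀ x₁ t a N).ker) := by
  have := h.finite_conjSpan N
  obtain ⟨C, σ, hσ⟩ := exists_isLipschitzSection_hnnMarking hx t a N
  exact hσ.quotient_ker.isHyperbolic

theorem exists_areaLe_of_mem_ker_hnnMarking (h : IsLevelAction lev t a R β) (hx : x₀ ≠ x₁)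
    (N : ℕ) : ∃ B, ∀ w ∈ (hnnMarking x₀ x₁ t a N).ker,
      AreaLe (triv (hnnMarking x₀ x₁ t a N) B) w (wnorm w) := by
  have := h.finite_conjSpan N
  obtain ⟨C, σ, hσ⟩ := exists_isLipschitzSection_hnnMarking hx t a N
  exact ⟨C + 1, fun w hw => hσ.areaLe_wnorm hw⟩

theorem eq_bot_of_finite_normal_quotient_ker (h : IsLevelAction lev t a R β) (hx : x₀ ≠ x₁)
    (N : ℕ) {S : Subgroup (FreeGroup ι ⧸ (hnnMarking x₀ x₁ t a N).ker)} (hS : S.Normal)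
    (hfin : (S : Set (FreeGroup ι ⧸ (hnnMarking x₀ x₁ t a N).ker)).Finite) : S = ⊥ := by
  let e := QuotientGroup.quotientKerEquivOfSurjective _ (hnnMarking_surjective hx t a N)
  refine (Subgroup.map_eq_bot_iff_of_injective _ e.injective).1 <|
    h.eq_bot_of_finite_normal N (hS.map e.toMonoidHom e.surjective) ?_
  rw [Subgroup.coe_map]
  exact hfin.image _

end Marking

end IsLevelAction

/-! ### Block actions -/

theorem wnorm_induction {P : ℕ → FreeGroup ι → Prop} (one : P 0 1)
    (mul : ∀ n x w, P n w → P (n + 1) (.mk [x] * w)) (w : FreeGroup ι) : P (wnorm w) w := by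
  suffices ∀ l : List (ι × Bool), P l.length (.mk l) by
    simpa only [length_reducedWord, mk_reducedWord] using this (reducedWord w)
  intro l
  induction l with
  | nil => exact one
  | cons x l ih =>
    have := mul _ x _ ih
    rwa [FreeGroup.mul_mk] at this

section Comparison

variable {Ω Ω' : Type*} {φ : FreeGroup ι →* Equiv.Perm Ω} {φ' : FreeGroup ι →* Equiv.Perm Ω'}
  {f : Ω → Ω'}

theorem apply_eq_of_forall_of {lev : Ω → ℤ} {L : ℕ} {ω₀ : Ω}
    (hlev : ∀ i ω, |lev (φ (.of i) ω) - lev ω| ≤ 1)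
    (hf : ∀ i ω, |lev ω - lev ω₀| ≤ L → f (φ (.of i) ω) = φ' (.of i) (f ω))
    {w : FreeGroup ι} (hw : wnorm w ≤ L) : f (φ w ω₀) = φ' w (f ω₀) := by
  suffices |lev (φ w ω₀) - lev ω₀| ≤ wnorm w ∧ (wnorm w ≤ L → f (φ w ω₀) = φ' w (f ω₀)) from
    this.2 hw
  refine wnorm_induction (P := fun n w => |lev (φ w ω₀) - lev ω₀| ≤ n ∧
    (n ≤ L → f (φ w ω₀) = φ' w (f ω₀))) (by simp) ?_ w
  rintro n ⟨i, _ | _⟩ w ⟨hn, hfn⟩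
  · have hletter : FreeGroup.mk [(i, false)] = (FreeGroup.of i)⁻¹ := rfl
    obtain ⟨ω, hω⟩ := (φ (.of i)).surjective (φ w ω₀)
    have hstep := hlev i ω
    rw [hletter, map_mul, map_mul, map_inv, map_inv, Equiv.Perm.mul_apply, Equiv.Perm.mul_apply,
      Equiv.Perm.inv_eq_iff_eq.2 hω.symm]
    rw [hω, abs_le] at hstep
    rw [abs_le] at hn ⊢
    refine ⟨by push_cast; omega, fun hL => ?_⟩
    rw [← hfn (by omega), ← hω, hf i ω (by rw [abs_le]; omega), Equiv.Perm.inv_eq_iff_eq.2 rfl]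
  · have hletter : FreeGroup.mk [(i, true)] = FreeGroup.of i := rfl
    have hstep := hlev i (φ w ω₀)
    rw [hletter, map_mul, map_mul, Equiv.Perm.mul_apply, Equiv.Perm.mul_apply]
    rw [abs_le] at hstep hn ⊢
    refine ⟨by push_cast; omega, fun hL => ?_⟩
    rw [← hfn (by omega), hf i _ (by rw [abs_le]; omega)]

theorem semiconj_of_forall_of (hf : ∀ i, Semiconj f (φ (.of i)) (φ' (.of i)))
    (w : FreeGroup ι) : Semiconj f (φ w) (φ' w) := fun _ =>
  apply_eq_of_forall_of (lev := fun _ => 0) (by simp) (fun i ω _ => hf i ω) le_rfl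

end Comparison

/-- The shift of the first coordinate, which plays the role of a level. -/
def levelShift (X : Type*) : Equiv.Perm (ℤ × X) := (Equiv.addRight (1 : ℤ)).prodCongr (.refl X)

@[simp]
theorem levelShift_apply {X : Type*} (ω : ℤ × X) : levelShift X ω = (ω.1 + 1, ω.2) := rfl

@[simp]
theorem levelShift_inv_apply {X : Type*} (ω : ℤ × X) :
    (levelShift X)⁻¹ ω = (ω.1 - 1, ω.2) := rfl

/-- The sign `1` or `-1` of a Boolean. -/
def boolSign (e : Bool) : ℤ := bif e then 1 else -1

@[simp]
theorem boolSign_not (e : Bool) : boolSign (!e) = -boolSign e := by cases e <;> rfl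

theorem abs_boolSign (e : Bool) : |boolSign e| = 1 := by cases e <;> rfl

section BlockPerm

variable {Z : Type*} [Ring Z] (p : ℤ)

/-- The involution flipping the Boolean at levels `0` and `p`, which at level `p` also adds the
sign of the Boolean to the last coordinate. -/
def blockFlip : ℤ × Bool × Z → ℤ × Bool × Z
  | (l, e, y) =>
    if l = 0 then (l, !e, y) else if l = p then (l, !e, y + boolSign e) else (l, e, y)

theorem blockFlip_involutive : Involutive (blockFlip p : ℤ × Bool × Z → ℤ × Bool × Z) := by
  rintro ⟨l, e, y⟩
  by_cases h₀ : l = 0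
  · simp [blockFlip, h₀]
  by_cases hp : l = p
  · subst hp; simp [blockFlip, h₀]
  · simp [blockFlip, h₀, hp]

variable (Z) in
/-- The involution `blockFlip` as a permutation. -/
def blockPerm : Equiv.Perm (ℤ × Bool × Z) := (blockFlip_involutive p).toPerm

variable {p}

theorem blockPerm_apply (l : ℤ) (e : Bool) (y : Z) : blockPerm Z p (l, e, y) =
    if l = 0 then (l, !e, y) else if l = p then (l, !e, y + boolSign e) else (l, e, y) := rfl

@[simp]
theorem blockPerm_apply_zero (e : Bool) (y : Z) : blockPerm Z p (0, e, y) = (0, !e, y) := rfl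

theorem blockPerm_apply_self (hp : p ≠ 0) (e : Bool) (y : Z) :
    blockPerm Z p (p, e, y) = (p, !e, y + boolSign e) := by
  rw [blockPerm_apply, if_neg hp, if_pos rfl]

theorem blockPerm_apply_of_ne {l : ℤ} (h₀ : l ≠ 0) (hp : l ≠ p) (x : Bool × Z) :
    blockPerm Z p (l, x) = (l, x) := by
  rw [blockPerm_apply, if_neg h₀, if_neg hp]

@[simp]
theorem blockPerm_apply_fst (ω : ℤ × Bool × Z) : (blockPerm Z p ω).1 = ω.1 := by
  obtain ⟨l, e, y⟩ := ω
  rw [blockPerm_apply]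
  split_ifs <;> rfl

end BlockPerm

section BlockAction

variable [DecidableEq ι] (x₀ x₁ : ι)

theorem pairMarking_of_rel {H : Type*} [Group H] {P : G → H → Prop} {a t : G} {a' t' : H}
    (ha : P a a') (ht : P t t') (h_one : P 1 1) (i : ι) :
    P (pairMarking x₀ x₁ a t (.of i)) (pairMarking x₀ x₁ a' t' (.of i)) := by
  simp only [pairMarking, FreeGroup.lift_apply_of]
  split_ifs <;> assumption

theorem semiconj_pairMarking {Ω Ω' : Type*} {f : Ω → Ω'} {a t : Equiv.Perm Ω}
    {a' t' : Equiv.Perm Ω'} (ha : Semiconj f a a') (ht : Semiconj f t t') (w : FreeGroup ι) :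
    Semiconj f (pairMarking x₀ x₁ a t w) (pairMarking x₀ x₁ a' t' w) :=
  semiconj_of_forall_of (pairMarking_of_rel x₀ x₁ (P := fun (g : Equiv.Perm Ω)
    (g' : Equiv.Perm Ω') => Semiconj f g g') ha ht .id_right) w

/-- The action of the free group in which `x₀` acts by `blockPerm` and `x₁` by the shift. The
parameters `d` are the position `p` of the second flip and the number `M`, where the last coordinate
lives in `ℤ/(M + 1)`. -/
def blockAction (d : ℕ × ℕ) : FreeGroup ι →* Equiv.Perm (ℤ × Bool × ZMod (d.2 + 1)) :=
  pairMarking x₀ x₁ (blockPerm _ d.1) (levelShift _)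

theorem apply_blockAction_eq_of_forall {d d' : ℕ × ℕ} {L : ℕ}
    {f : ℤ × Bool × ZMod (d.2 + 1) → ℤ × Bool × ZMod (d'.2 + 1)}
    {ω₀ : ℤ × Bool × ZMod (d.2 + 1)}
    (hflip : ∀ ω, |ω.1 - ω₀.1| ≤ L → f (blockPerm _ d.1 ω) = blockPerm _ d'.1 (f ω))
    (hshift : Semiconj f (levelShift _) (levelShift _)) {w : FreeGroup ι} (hw : wnorm w ≤ L) :
    f (blockAction x₀ x₁ d w ω₀) = blockAction x₀ x₁ d' w (f ω₀) := by
  refine apply_eq_of_forall_of (lev := Prod.fst) (L := L) (fun i => ?_) (fun i => ?_) hw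
  · rcases pairMarking_of_cases x₀ x₁ (blockPerm (ZMod (d.2 + 1)) d.1) (levelShift _) i with
      h | h | h <;> simp [blockAction, h]
  · exact pairMarking_of_rel x₀ x₁ (P := fun (g : Equiv.Perm (ℤ × Bool × ZMod (d.2 + 1)))
      (g' : Equiv.Perm (ℤ × Bool × ZMod (d'.2 + 1))) =>
        ∀ ω, |ω.1 - ω₀.1| ≤ L → f (g ω) = g' (f ω))
      hflip (fun ω _ => hshift ω) (fun _ _ => rfl) i

variable {x₀ x₁}

/-- A short word sees at most one of the two flip levels, and either flip alone looks like the one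
of `blockAction x₀ x₁ (0, 0)`. -/
theorem blockAction_eq_one_of_two_mul_wnorm_lt {d : ℕ × ℕ} {w : FreeGroup ι}
    (hw : 2 * wnorm w < d.1) (hw₀ : blockAction x₀ x₁ (0, 0) w = 1) :
    blockAction x₀ x₁ d w = 1 := by
  ext1 ⟨l₀, e₀, y₀⟩
  rw [Equiv.Perm.one_apply]
  by_cases hl₀ : |l₀| ≤ wnorm w
  · have h := apply_blockAction_eq_of_forall x₀ x₁ (d := (0, 0)) (d' := d) (ω₀ := (l₀, e₀, 0))
      (f := fun ω => (ω.1, ω.2.1, y₀)) (w := w) ?_ (fun _ => rfl) le_rfl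
    · rw [← h, hw₀, Equiv.Perm.one_apply]
    rintro ⟨l, e, y⟩ hl
    rw [abs_le] at hl₀ hl
    rw [blockPerm_apply_fst]
    rcases eq_or_ne l 0 with rfl | h₀
    · simp
    · simp only [blockPerm_apply_of_ne h₀ (p := ((0 : ℕ) : ℤ)) h₀,
        blockPerm_apply_of_ne h₀ (p := (d.1 : ℤ)) (l := l) (by omega)]
  · have h := apply_blockAction_eq_of_forall x₀ x₁ (d := (0, 0)) (d' := d)
      (ω₀ := (l₀ - d.1, e₀, 0)) (w := w)
      (f := fun ω => (ω.1 + d.1, ω.2.1, y₀ + (bif e₀ then 1 else 0) - (bif ω.2.1 then 1 else 0)))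
      ?_ (fun _ => ?_) le_rfl
    · simpa [hw₀] using h.symm
    · rintro ⟨l, e, y⟩ hl
      rw [abs_le] at hl
      dsimp only at hl
      rw [not_le, lt_abs] at hl₀
      rcases eq_or_ne l 0 with rfl | h₀
      · have hp : (d.1 : ℤ) ≠ 0 := by omega
        cases e <;> simp [blockPerm_apply_self hp, boolSign, sub_eq_add_neg]
      · simp only [blockPerm_apply_of_ne h₀ (p := ((0 : ℕ) : ℤ)) h₀,
          blockPerm_apply_of_ne (p := (d.1 : ℤ)) (l := l + d.1) (by omega) (by omega)]
    · simp [add_right_comm]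

end BlockAction

/-! ### Block kernels and their hyperbolic approximations -/

section BlockKernel

variable [DecidableEq ι] {x₀ x₁ : ι}

variable (x₀ x₁) in
/-- The words acting trivially in every block action with parameters in `D`. The quotient of the
free group by such a kernel is the marked group attached to `D`. -/
def blockKernel (D : Set (ℕ × ℕ)) : Subgroup (FreeGroup ι) := ⨅ d ∈ D, (blockAction x₀ x₁ d).ker

theorem mem_blockKernel {D : Set (ℕ × ℕ)} {w : FreeGroup ι} :
    w ∈ blockKernel x₀ x₁ D ↔ ∀ d ∈ D, blockAction x₀ x₁ d w = 1 := by
  simp [blockKernel, Subgroup.mem_iInf, MonoidHom.mem_ker]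

instance blockKernel_normal (D : Set (ℕ × ℕ)) : (blockKernel x₀ x₁ D).Normal :=
  Subgroup.normal_iInf_normal fun _ => Subgroup.normal_iInf_normal fun _ => inferInstance

theorem blockKernel_anti {D D' : Set (ℕ × ℕ)} (h : D ⊆ D') :
    blockKernel x₀ x₁ D' ≤ blockKernel x₀ x₁ D :=
  biInf_mono h

theorem mem_blockKernel_of_forall_mem_or_lt {D D' : Set (ℕ × ℕ)} {w : FreeGroup ι}
    (h₀ : (0, 0) ∈ D') (h : ∀ d ∈ D, d ∈ D' ∨ 2 * wnorm w < d.1) (hw : w ∈ blockKernel x₀ x₁ D') :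
    w ∈ blockKernel x₀ x₁ D := by
  rw [mem_blockKernel] at hw ⊢
  intro d hd
  rcases h d hd with hmem | hlt
  · exact hw d hmem
  · exact blockAction_eq_one_of_two_mul_wnorm_lt hlt (hw _ h₀)

variable (D : Finset (ℕ × ℕ))

/-- The disjoint union of the spaces of the block actions with parameters in `D`. -/
abbrev BlockUnion : Type := Σ d : D, ℤ × Bool × ZMod (d.1.2 + 1)

/-- The action of `x₀` on the disjoint union of the blocks. -/
def unionFlip : Equiv.Perm (BlockUnion D) :=
  Equiv.Perm.sigmaCongrRightHom _ fun d => blockPerm _ d.1.1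

/-- The action of `x₁` on the disjoint union of the blocks. -/
def unionShift : Equiv.Perm (BlockUnion D) :=
  Equiv.Perm.sigmaCongrRightHom _ fun _ => levelShift _

theorem unionFlip_apply (ω : BlockUnion D) : unionFlip D ω = ⟨ω.1, blockPerm _ ω.1.1.1 ω.2⟩ := rfl

theorem ker_pairMarking_union :
    (pairMarking x₀ x₁ (unionFlip D) (unionShift D)).ker = blockKernel x₀ x₁ (D : Set (ℕ × ℕ)) := by
  ext w
  have hblock (d : D) : pairMarking x₀ x₁ (fun d : D => blockPerm (ZMod (d.1.2 + 1)) d.1.1)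
      (fun _ => levelShift _) w d = blockAction x₀ x₁ d.1 w :=
    map_pairMarking x₀ x₁ (fun d : D => blockPerm (ZMod (d.1.2 + 1)) d.1.1) (fun _ => levelShift _)
      (Pi.evalMonoidHom _ d) w
  rw [MonoidHom.mem_ker, unionFlip, unionShift, ← map_pairMarking,
    map_eq_one_iff _ Equiv.Perm.sigmaCongrRightHom_injective, funext_iff, mem_blockKernel]
  simp only [hblock, Pi.one_apply, Subtype.forall, Finset.mem_coe]

theorem finite_setOf_abs_level_le (l : ℤ) : {ω : BlockUnion D | |ω.2.1| ≤ l}.Finite := by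
  have (d : D) : Finite (ZMod (d.1.2 + 1)) := inferInstance
  have hfin : (⋃ d : D, (Sigma.mk d : _ → BlockUnion D) '' Set.Icc (-l) l ×ˢ Set.univ).Finite :=
    Set.finite_iUnion fun d => ((Set.finite_Icc _ _).prod Set.finite_univ).image _
  exact hfin.subset fun ⟨d, ω⟩ hω => Set.mem_iUnion.2 ⟨d, ω, ⟨abs_le.1 hω, trivial⟩, rfl⟩

variable {D}

theorem isLevelAction_union (h₀ : (0, 0) ∈ D) :
    IsLevelAction (fun ω : BlockUnion D => ω.2.1) (unionShift D) (unionFlip D) (D.sup Prod.fst)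
      {ω | ω.1.1 = (0, 0)} where
  lev_shift _ := rfl
  lev_apply ω := blockPerm_apply_fst ω.2
  apply_eq_of_lt ω hω := by
    obtain ⟨d, l, x⟩ := ω
    have hle : d.1.1 ≤ D.sup Prod.fst := Finset.le_sup (f := Prod.fst) d.2
    rw [lt_abs] at hω
    dsimp only at hω
    rw [unionFlip_apply, blockPerm_apply_of_ne (by omega) (by dsimp only; omega)]
  finite_level_le := finite_setOf_abs_level_le D
  exists_mem := ⟨⟨⟨(0, 0), h₀⟩, 0, true, 0⟩, rfl, rfl⟩
  shift_mem_iff _ := Iff.rfl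
  apply_mem_iff _ := Iff.rfl
  apply_eq_iff := by
    rintro ⟨⟨d, hd⟩, l, e, y⟩ rfl
    rw [unionFlip_apply]
    rcases eq_or_ne l 0 with rfl | hl
    · simp
    · simp [blockPerm_apply_of_ne hl hl, hl]

variable (x₀ x₁ D) in
/-- The kernel of the HNN extension marking approximating `blockKernel x₀ x₁ D`: the two agree on
words of length at most `L`. -/
def blockApprox (L : ℕ) : Subgroup (FreeGroup ι) :=
  (hnnMarking x₀ x₁ (unionShift D) (unionFlip D) (2 * L)).ker

instance blockApprox_normal (L : ℕ) : (blockApprox x₀ x₁ D L).Normal :=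
  MonoidHom.normal_ker _

theorem blockApprox_le_blockKernel (L : ℕ) : blockApprox x₀ x₁ D L ≤ blockKernel x₀ x₁ D :=
  (ker_hnnMarking_le x₀ x₁ _ _ _).trans_eq (ker_pairMarking_union D)

theorem mem_blockApprox_of_mem_blockKernel (h₀ : (0, 0) ∈ D) {L : ℕ} {w : FreeGroup ι}
    (hw : wnorm w ≤ L) (hwD : w ∈ blockKernel x₀ x₁ (D : Set (ℕ × ℕ))) :
    w ∈ blockApprox x₀ x₁ D L := by
  rw [← ker_pairMarking_union] at hwD
  exact (isLevelAction_union h₀).hnnMarking_eq_one hw hwD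

theorem exists_areaLe_of_mem_blockApprox (hx : x₀ ≠ x₁) (h₀ : (0, 0) ∈ D) (L : ℕ) :
    ∃ B, ∀ w ∈ blockApprox x₀ x₁ D L,
      AreaLe {r | wnorm r ≤ B ∧ r ∈ blockApprox x₀ x₁ D L} w (wnorm w) :=
  (isLevelAction_union h₀).exists_areaLe_of_mem_ker_hnnMarking hx _

theorem blockApprox_mem_Hset {n : ℕ} {x₀ x₁ : Fin n} (hx : x₀ ≠ x₁) (h₀ : (0, 0) ∈ D) (L : ℕ) :
    (⟨blockApprox x₀ x₁ D L, inferInstance⟩ : MarkedGroup n) ∈ Hset n := by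
  have h := isLevelAction_union h₀
  exact ⟨h.isHyperbolic_mk'_ker_hnnMarking hx _,
    h.not_exists_index_zpowers_ne_zero hx (ker_hnnMarking_le _ _ _ _ _),
    fun _ hS hfin => h.eq_bot_of_finite_normal_quotient_ker hx _ hS hfin⟩

end BlockKernel

/-! ### The Heisenberg action -/

/-- A point of the space of the Heisenberg action, apart from its level: the coordinates of an
integral Heisenberg matrix and two Booleans which control how they change. -/
@[ext]
structure HeisFiber where
  flipX : Bool
  x : ℤ
  flipY : Bool
  y : ℤ
  z : ℤ

section HeisPerm

variable (p : ℤ)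

/-- The involution of the Heisenberg action. The levels `0` and `p` act on the `X`-coordinates and
the levels `1` and `p + 1` on the `Y`-coordinates as the levels `0` and `p` do in `blockFlip`;
the change of `z` is that of a Heisenberg matrix multiplied by an elementary one. -/
def heisFlip (ω : ℤ × HeisFiber) : ℤ × HeisFiber :=
  (ω.1,
    if ω.1 = 0 then { ω.2 with flipX := !ω.2.flipX }
    else if ω.1 = p then { ω.2 with flipX := !ω.2.flipX, x := ω.2.x + boolSign ω.2.flipX }
    else if ω.1 = 1 then { ω.2 with flipY := !ω.2.flipY }
    else if ω.1 = p + 1 then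
      { ω.2 with
        flipY := !ω.2.flipY
        y := ω.2.y + boolSign ω.2.flipY
        z := ω.2.z + ω.2.x * boolSign ω.2.flipY }
    else ω.2)

theorem heisFlip_involutive : Involutive (heisFlip p) := by
  rintro ⟨l, s⟩
  unfold heisFlip
  split_ifs <;> simp_all

/-- The involution `heisFlip` as a permutation. -/
def heisPerm : Equiv.Perm (ℤ × HeisFiber) := (heisFlip_involutive p).toPerm

theorem heisPerm_inv : (heisPerm p)⁻¹ = heisPerm p := (heisFlip_involutive p).toPerm_symm

variable {p}

theorem heisPerm_apply (l : ℤ) (s : HeisFiber) : heisPerm p (l, s) =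
    (l,
      if l = 0 then { s with flipX := !s.flipX }
      else if l = p then { s with flipX := !s.flipX, x := s.x + boolSign s.flipX }
      else if l = 1 then { s with flipY := !s.flipY }
      else if l = p + 1 then
        { s with
          flipY := !s.flipY
          y := s.y + boolSign s.flipY
          z := s.z + s.x * boolSign s.flipY }
      else s) := rfl

variable (s : HeisFiber)

theorem heisPerm_apply_zero :
    heisPerm p (0, s) = (0, { s with flipX := !s.flipX }) := rfl

theorem heisPerm_apply_self (hp : p ≠ 0) :
    heisPerm p (p, s) = (p, { s with flipX := !s.flipX, x := s.x + boolSign s.flipX }) := by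
  simp [heisPerm, heisFlip, hp]

theorem heisPerm_apply_one (hp : p ≠ 1) :
    heisPerm p (1, s) = (1, { s with flipY := !s.flipY }) := by
  simp [heisPerm, heisFlip, hp.symm]

theorem heisPerm_apply_add_one (hp₀ : p ≠ 0) (hp : p + 1 ≠ 0) :
    heisPerm p (p + 1, s) = (p + 1,
      { s with
        flipY := !s.flipY
        y := s.y + boolSign s.flipY
        z := s.z + s.x * boolSign s.flipY }) := by
  simp [heisPerm, heisFlip, hp₀, hp]

end HeisPerm

/-- The projection of the Heisenberg action to its `X`-coordinates. -/
def heisToX (M : ℕ) (ω : ℤ × HeisFiber) : ℤ × Bool × ZMod (M + 1) :=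
  (ω.1, ω.2.flipX, (ω.2.x : ZMod (M + 1)))

/-- The projection of the Heisenberg action to its `Y`-coordinates, which move one level above
those of a block action. -/
def heisToY (M : ℕ) (ω : ℤ × HeisFiber) : ℤ × Bool × ZMod (M + 1) :=
  (ω.1 - 1, ω.2.flipY, (ω.2.y : ZMod (M + 1)))

/-- The translation of the central Heisenberg coordinate. -/
def centralShift (c : ℤ) (ω : ℤ × HeisFiber) : ℤ × HeisFiber :=
  (ω.1, { ω.2 with z := ω.2.z + c })

theorem semiconj_heisToX_heisPerm (p : ℤ) (M : ℕ) :
    Semiconj (heisToX M) (heisPerm p) (blockPerm (ZMod (M + 1)) p) := by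
  rintro ⟨l, s⟩
  simp only [heisPerm_apply, heisToX, blockPerm_apply]
  split_ifs <;> simp

theorem semiconj_heisToY_heisPerm {p : ℕ} (hp : p ≠ 1) (M : ℕ) :
    Semiconj (heisToY M) (heisPerm p) (blockPerm (ZMod (M + 1)) p) := by
  rintro ⟨l, s⟩
  simp only [heisPerm_apply, heisToY, blockPerm_apply]
  split_ifs <;> first | omega | simp

theorem semiconj_centralShift_heisPerm (p c : ℤ) :
    Semiconj (centralShift c) (heisPerm p) (heisPerm p) := by
  rintro ⟨l, s⟩
  simp only [heisPerm_apply, centralShift]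
  split_ifs <;> simp [add_right_comm]

/-- The bounds satisfied by the fibre coordinates of the image of `s₀` under a word of
length `n`. -/
structure HeisFiber.Near (s₀ : HeisFiber) (n : ℕ) (s : HeisFiber) : Prop where
  x_le : |s.x - s₀.x| ≤ n
  y_le : |s.y - s₀.y| ≤ n
  z_le : |s.z - s₀.z - s₀.x * (s.y - s₀.y)| ≤ (n : ℤ) ^ 2

namespace HeisFiber.Near

variable {s₀ s : HeisFiber} {n : ℕ}

theorem refl (s₀ : HeisFiber) : s₀.Near 0 s₀ := ⟨by simp, by simp, by simp⟩

theorem succ (h : s₀.Near n s) : s₀.Near (n + 1) s := by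
  obtain ⟨hx, hy, hz⟩ := h
  refine ⟨hx.trans ?_, hy.trans ?_, hz.trans ?_⟩ <;> push_cast
  · omega
  · omega
  · nlinarith

theorem moveX (h : s₀.Near n s) (e : Bool) :
    s₀.Near (n + 1) { s with flipX := !e, x := s.x + boolSign e } := by
  refine ⟨?_, h.succ.y_le, h.succ.z_le⟩
  rw [add_sub_right_comm, Nat.cast_succ, ← abs_boolSign e]
  exact (abs_add_le _ _).trans (by gcongr; exact h.x_le)

theorem moveY (h : s₀.Near n s) (e : Bool) :
    s₀.Near (n + 1)
      { s with flipY := !e, y := s.y + boolSign e, z := s.z + s.x * boolSign e } := by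
  refine ⟨h.succ.x_le, ?_, ?_⟩
  · rw [add_sub_right_comm, Nat.cast_succ, ← abs_boolSign e]
    exact (abs_add_le _ _).trans (by gcongr; exact h.y_le)
  · calc |s.z + s.x * boolSign e - s₀.z - s₀.x * (s.y + boolSign e - s₀.y)|
        = |(s.z - s₀.z - s₀.x * (s.y - s₀.y)) + (s.x - s₀.x) * boolSign e| := by congr 1; ring
      _ ≤ (n : ℤ) ^ 2 + n := by
        refine (abs_add_le _ _).trans (add_le_add h.z_le ?_)
        rw [abs_mul, abs_boolSign, mul_one]
        exact h.x_le
      _ ≤ ((n + 1 : ℕ) : ℤ) ^ 2 := by push_cast; nlinarith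

theorem heisPerm {l : ℤ} (p : ℤ) (h : s₀.Near n s) :
    s₀.Near (n + 1) (heisPerm p (l, s)).2 := by
  rw [heisPerm_apply]
  split_ifs
  · exact ⟨h.succ.x_le, h.succ.y_le, h.succ.z_le⟩
  · exact h.moveX _
  · exact ⟨h.succ.x_le, h.succ.y_le, h.succ.z_le⟩
  · exact h.moveY _
  · exact h.succ

end HeisFiber.Near

section HeisAction

variable [DecidableEq ι] (x₀ x₁ : ι)

/-- The action of the free group in which `x₀` acts by `heisPerm` and `x₁` by the shift. -/
def heisAction (p : ℤ) : FreeGroup ι →* Equiv.Perm (ℤ × HeisFiber) :=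
  pairMarking x₀ x₁ (heisPerm p) (levelShift _)

theorem heisToX_heisAction (p M : ℕ) (w : FreeGroup ι) (ω : ℤ × HeisFiber) :
    heisToX M (heisAction x₀ x₁ p w ω) = blockAction x₀ x₁ (p, M) w (heisToX M ω) :=
  semiconj_pairMarking x₀ x₁ (semiconj_heisToX_heisPerm p M) (fun _ => rfl) w ω

theorem heisToY_heisAction {p : ℕ} (hp : p ≠ 1) (M : ℕ) (w : FreeGroup ι) (ω : ℤ × HeisFiber) :
    heisToY M (heisAction x₀ x₁ p w ω) = blockAction x₀ x₁ (p, M) w (heisToY M ω) :=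
  semiconj_pairMarking x₀ x₁ (semiconj_heisToY_heisPerm hp M)
    (fun ω => by simp [heisToY]) w ω

theorem heisAction_centralShift (p : ℤ) (w : FreeGroup ι) (c : ℤ) (ω : ℤ × HeisFiber) :
    heisAction x₀ x₁ p w (centralShift c ω) = centralShift c (heisAction x₀ x₁ p w ω) :=
  (semiconj_pairMarking x₀ x₁ (semiconj_centralShift_heisPerm p c) (fun _ => rfl) w ω).symm

theorem near_heisAction (p : ℤ) (w : FreeGroup ι) (ω : ℤ × HeisFiber) :
    ω.2.Near (wnorm w) (heisAction x₀ x₁ p w ω).2 := by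
  refine wnorm_induction (P := fun n w => ω.2.Near n (heisAction x₀ x₁ p w ω).2) (.refl _) ?_ w
  intro n x w h
  rw [map_mul, Equiv.Perm.mul_apply]
  have letter := pairMarking_mk_singleton_cases x₀ x₁ (heisPerm p) (levelShift _) x
  rw [heisPerm_inv, Set.insert_idem] at letter
  rcases letter with hx | hx | hx | hx <;> rw [heisAction, hx]
  · exact h.heisPerm p
  all_goals exact h.succ

variable {x₀ x₁} {p M : ℕ}

/-- A relator of the block acts on the Heisenberg space with trivial `X`- and `Y`-coordinates: these
vanish modulo `M + 1`, and a short word cannot move them by a non-zero multiple of `M + 1`. -/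
theorem exists_heisAction_eq_centralShift_of_wnorm_le (hp : p ≠ 1) {r : FreeGroup ι}
    (hr : wnorm r ≤ M) (hr₁ : blockAction x₀ x₁ (p, M) r = 1) (ω : ℤ × HeisFiber) :
    ∃ c : ℤ, |c| ≤ (wnorm r : ℤ) ^ 2 ∧ heisAction x₀ x₁ p r ω = centralShift c ω := by
  have hX := heisToX_heisAction x₀ x₁ p M r ω
  have hY := heisToY_heisAction x₀ x₁ hp M r ω
  obtain ⟨hx, hy, hz⟩ := near_heisAction x₀ x₁ p r ω
  set ω' := heisAction x₀ x₁ p r ω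
  rw [hr₁, Equiv.Perm.one_apply] at hX hY
  simp only [heisToX, heisToY, Prod.mk.injEq] at hX hY
  have eq_of_cast_eq {a b : ℤ} (hab : |a - b| ≤ wnorm r) (h : (a : ZMod (M + 1)) = b) : a = b := by
    refine sub_eq_zero.1 (Int.eq_zero_of_abs_lt_dvd (m := M + 1) ?_ (hab.trans_lt (by omega)))
    rw [← sub_eq_zero, ← Int.cast_sub, ZMod.intCast_zmod_eq_zero_iff_dvd] at h
    exact_mod_cast h
  have hx' := eq_of_cast_eq hx hX.2.2
  have hy' := eq_of_cast_eq hy hY.2.2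
  refine ⟨ω'.2.z - ω.2.z, by simpa [hy'] using hz, Prod.ext hX.1 ?_⟩
  ext <;> simp [centralShift, hX.2.1, hx', hY.2.1, hy']

theorem AreaLe.exists_heisAction_eq_centralShift (hp : p ≠ 1) {m : ℕ} (hm : m ≤ M)
    {R : Set (FreeGroup ι)} (hR : ∀ r ∈ R, wnorm r ≤ m ∧ blockAction x₀ x₁ (p, M) r = 1)
    {w : FreeGroup ι} {k : ℕ} (h : AreaLe R w k) (ω : ℤ × HeisFiber) :
    ∃ c : ℤ, |c| ≤ k * (m : ℤ) ^ 2 ∧ heisAction x₀ x₁ p w ω = centralShift c ω := by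
  refine h.induction (P := fun w k => ∃ c : ℤ, |c| ≤ k * (m : ℤ) ^ 2 ∧
    heisAction x₀ x₁ p w ω = centralShift c ω) ⟨0, by simp, by simp [centralShift]⟩ ?_
  rintro g r w k hr ⟨c, hc, hw⟩
  have hr' : wnorm r ≤ m ∧ blockAction x₀ x₁ (p, M) r = 1 :=
    hr.elim (hR r) fun hr => by simpa [wnorm_inv] using hR _ hr
  obtain ⟨d, hd, hrd⟩ := exists_heisAction_eq_centralShift_of_wnorm_le hp (hr'.1.trans hm) hr'.2
    (heisAction x₀ x₁ p g ω)
  have conj : heisAction x₀ x₁ p (g⁻¹ * r * g) ω = centralShift d ω := by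
    rw [map_mul, map_mul, Equiv.Perm.mul_apply, Equiv.Perm.mul_apply, hrd,
      heisAction_centralShift, map_inv,
      ← Equiv.Perm.mul_apply, inv_mul_cancel, Equiv.Perm.one_apply]
  refine ⟨d + c, ?_, ?_⟩
  · calc |d + c| ≤ (wnorm r : ℤ) ^ 2 + k * (m : ℤ) ^ 2 :=
          (abs_add_le _ _).trans (add_le_add hd hc)
      _ ≤ (m : ℤ) ^ 2 + k * (m : ℤ) ^ 2 := by gcongr; exact hr'.1
      _ = ((k + 1 : ℕ) : ℤ) * (m : ℤ) ^ 2 := by push_cast; ring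
  · rw [map_mul, Equiv.Perm.mul_apply, hw, heisAction_centralShift, conj]
    simp [centralShift, add_assoc]

end HeisAction

/-! ### Commutator words -/

theorem wnorm_commutatorElement_le (u v : FreeGroup ι) :
    wnorm ⁅u, v⁆ ≤ 2 * wnorm u + 2 * wnorm v := by
  rw [commutatorElement_def]
  have h₁ := wnorm_mul_le (u * v * u⁻¹) v⁻¹
  have h₂ := wnorm_mul_le (u * v) u⁻¹
  have h₃ := wnorm_mul_le u v
  rw [wnorm_inv] at h₁ h₂
  omega

theorem commutatorElement_pow_mem {N : Subgroup G} [N.Normal] {g h : G} (hgh : ⁅g, h⁆ ∈ N)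
    (m n : ℕ) : ⁅g ^ m, h ^ n⁆ ∈ N := by
  rw [← QuotientGroup.eq_one_iff, ← QuotientGroup.mk'_apply, map_commutatorElement,
    commutatorElement_eq_one_iff_commute] at hgh ⊢
  simpa only [map_pow] using hgh.pow_pow m n

section CommutatorWords

variable (x₀ x₁ : ι) (p : ℕ)

/-- The word which applies the involution at two levels at distance `p`. It moves the Heisenberg
coordinate `x` by `1`. -/
def xWord : FreeGroup ι := .of x₀ * ((.of x₁ ^ p)⁻¹ * .of x₀ * .of x₁ ^ p)

/-- The translate of `xWord` by one level, which moves the Heisenberg coordinate `y` by `1`. -/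
def yWord : FreeGroup ι := (.of x₁)⁻¹ * xWord x₀ x₁ p * .of x₁

theorem wnorm_xWord_le : wnorm (xWord x₀ x₁ p) ≤ 2 * p + 2 := by
  have h₁ := wnorm_mul_le (.of x₀) ((.of x₁ ^ p)⁻¹ * .of x₀ * .of x₁ ^ p)
  have h₂ := wnorm_mul_le ((.of x₁ ^ p)⁻¹ * .of x₀) (.of x₁ ^ p)
  have h₃ := wnorm_mul_le (.of x₁ ^ p)⁻¹ (.of x₀)
  have h₄ := wnorm_pow_le (.of x₁) p
  rw [wnorm_of] at h₁ h₃ h₄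
  rw [wnorm_inv] at h₃
  unfold xWord
  omega

theorem wnorm_yWord_le : wnorm (yWord x₀ x₁ p) ≤ 2 * p + 4 := by
  have h₁ := wnorm_mul_le ((.of x₁)⁻¹ * xWord x₀ x₁ p) (.of x₁)
  have h₂ := wnorm_mul_le (.of x₁)⁻¹ (xWord x₀ x₁ p)
  have h₃ := wnorm_xWord_le x₀ x₁ p
  rw [wnorm_of] at h₁
  rw [wnorm_inv, wnorm_of] at h₂
  unfold yWord
  omega

theorem wnorm_commutatorElement_xWord_yWord_le :
    wnorm ⁅xWord x₀ x₁ p, yWord x₀ x₁ p⁆ ≤ 8 * p + 16 := by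
  have h₁ := wnorm_commutatorElement_le (xWord x₀ x₁ p) (yWord x₀ x₁ p)
  have h₂ := wnorm_xWord_le x₀ x₁ p
  have h₃ := wnorm_yWord_le x₀ x₁ p
  omega

theorem wnorm_commutatorElement_xWord_pow_yWord_pow_le (n : ℕ) :
    wnorm ⁅xWord x₀ x₁ p ^ n, yWord x₀ x₁ p ^ n⁆ ≤ n * (8 * p + 16) := by
  have hx : wnorm (xWord x₀ x₁ p ^ n) ≤ n * (2 * p + 2) :=
    (wnorm_pow_le _ n).trans (Nat.mul_le_mul_left n (wnorm_xWord_le x₀ x₁ p))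
  have hy : wnorm (yWord x₀ x₁ p ^ n) ≤ n * (2 * p + 4) :=
    (wnorm_pow_le _ n).trans (Nat.mul_le_mul_left n (wnorm_yWord_le x₀ x₁ p))
  have hxy := wnorm_commutatorElement_le (xWord x₀ x₁ p ^ n) (yWord x₀ x₁ p ^ n)
  linarith

end CommutatorWords

theorem levelShift_pow_apply (X : Type*) (n : ℕ) (l : ℤ) (x : X) :
    (levelShift X ^ n) (l, x) = (l + n, x) := by
  induction n with
  | zero => simp
  | succ n ih => simp [pow_succ', ih, add_assoc]

theorem levelShift_pow_inv_apply (X : Type*) (n : ℕ) (l : ℤ) (x : X) :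
    (levelShift X ^ n)⁻¹ (l, x) = (l - n, x) := by
  rw [Equiv.Perm.inv_eq_iff_eq, levelShift_pow_apply, sub_add_cancel]

section Evaluation

variable [DecidableEq ι] {x₀ x₁ : ι} {p : ℕ} {X : Type*}

theorem pairMarking_xWord (hx : x₀ ≠ x₁) (a : Equiv.Perm (ℤ × X)) (l : ℤ) (x : X) :
    pairMarking x₀ x₁ a (levelShift X) (xWord x₀ x₁ p) (l, x) =
      a ((levelShift X ^ p)⁻¹ (a (l + p, x))) := by
  simp only [xWord, map_mul, map_inv, map_pow, pairMarking_of_fst, pairMarking_of_snd hx,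
    Equiv.Perm.mul_apply, levelShift_pow_apply]

theorem pairMarking_yWord (hx : x₀ ≠ x₁) (a : Equiv.Perm (ℤ × X)) (l : ℤ) (x : X) :
    pairMarking x₀ x₁ a (levelShift X) (yWord x₀ x₁ p) (l, x) =
      (levelShift X)⁻¹ (pairMarking x₀ x₁ a (levelShift X) (xWord x₀ x₁ p) (l + 1, x)) := by
  simp only [yWord, map_mul, map_inv, pairMarking_of_snd hx, Equiv.Perm.mul_apply,
    levelShift_apply]

theorem blockAction_xWord_apply_of_notMem (hx : x₀ ≠ x₁) {d : ℕ × ℕ} {l : ℤ}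
    (hl : l ∉ ({0, (d.1 : ℤ), -(p : ℤ), (d.1 : ℤ) - (p : ℤ)} : Set ℤ)) (s : Bool × ZMod (d.2 + 1)) :
    blockAction x₀ x₁ d (xWord x₀ x₁ p) (l, s) = (l, s) := by
  simp only [Set.mem_insert_iff, Set.mem_singleton_iff, not_or] at hl
  rw [blockAction, pairMarking_xWord hx, blockPerm_apply_of_ne (l := l + p) (by omega) (by omega),
    levelShift_pow_inv_apply, add_sub_cancel_right, blockPerm_apply_of_ne hl.1 hl.2.1]

theorem blockAction_yWord_apply_of_notMem (hx : x₀ ≠ x₁) {d : ℕ × ℕ} {l : ℤ}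
    (hl : l + 1 ∉ ({0, (d.1 : ℤ), -(p : ℤ), (d.1 : ℤ) - (p : ℤ)} : Set ℤ))
    (s : Bool × ZMod (d.2 + 1)) :
    blockAction x₀ x₁ d (yWord x₀ x₁ p) (l, s) = (l, s) := by
  have h := blockAction_xWord_apply_of_notMem hx hl s
  rw [blockAction] at h ⊢
  rw [pairMarking_yWord hx, h, levelShift_inv_apply, add_sub_cancel_right]

theorem blockAction_commutatorElement_eq_one (hx : x₀ ≠ x₁) {d : ℕ × ℕ} (hp : p ≠ 1)
    (hd : d.1 ≠ 1) (hdp : d.1 ≠ p + 1) (hpd : p ≠ d.1 + 1) :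
    blockAction x₀ x₁ d ⁅xWord x₀ x₁ p, yWord x₀ x₁ p⁆ = 1 := by
  rw [map_commutatorElement, commutatorElement_eq_one_iff_commute]
  refine Equiv.Perm.Disjoint.commute ?_
  rintro ⟨l, s⟩
  refine or_iff_not_imp_left.2 fun h => blockAction_yWord_apply_of_notMem hx ?_ s
  have hl := not_imp_comm.1 (blockAction_xWord_apply_of_notMem hx (l := l) · s) h
  simp only [Set.mem_insert_iff, Set.mem_singleton_iff] at hl ⊢
  omega

theorem heisAction_xWord (hx : x₀ ≠ x₁) (hp : p ≠ 0) (x y z : ℤ) :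
    heisAction x₀ x₁ p (xWord x₀ x₁ p) (0, ⟨true, x, true, y, z⟩) =
      (0, ⟨true, x + 1, true, y, z⟩) := by
  rw [heisAction, pairMarking_xWord hx, zero_add, heisPerm_apply_self _ (by exact_mod_cast hp),
    levelShift_pow_inv_apply, sub_self, heisPerm_apply_zero]
  rfl

theorem heisAction_yWord (hx : x₀ ≠ x₁) (hp₀ : p ≠ 0) (hp₁ : p ≠ 1) (x y z : ℤ) :
    heisAction x₀ x₁ p (yWord x₀ x₁ p) (0, ⟨true, x, true, y, z⟩) =
      (0, ⟨true, x, true, y + 1, z + x⟩) := by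
  rw [heisAction, pairMarking_yWord hx, pairMarking_xWord hx, zero_add, add_comm (1 : ℤ),
    heisPerm_apply_add_one _ (by exact_mod_cast hp₀) (by omega), levelShift_pow_inv_apply,
    add_sub_cancel_left, heisPerm_apply_one _ (by exact_mod_cast hp₁), levelShift_inv_apply]
  simp [boolSign]

theorem heisAction_xWord_pow (hx : x₀ ≠ x₁) (hp : p ≠ 0) (n : ℕ) (x y z : ℤ) :
    heisAction x₀ x₁ p (xWord x₀ x₁ p ^ n) (0, ⟨true, x, true, y, z⟩) =
      (0, ⟨true, x + n, true, y, z⟩) := by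
  induction n with
  | zero => simp
  | succ n ih =>
    simp only [pow_succ', map_mul, Equiv.Perm.mul_apply, ih, heisAction_xWord hx hp, add_assoc,
      Nat.cast_succ]

theorem heisAction_yWord_pow (hx : x₀ ≠ x₁) (hp₀ : p ≠ 0) (hp₁ : p ≠ 1) (n : ℕ) (x y z : ℤ) :
    heisAction x₀ x₁ p (yWord x₀ x₁ p ^ n) (0, ⟨true, x, true, y, z⟩) =
      (0, ⟨true, x, true, y + n, z + n * x⟩) := by
  induction n with
  | zero => simp
  | succ n ih =>
    simp only [pow_succ', map_mul, Equiv.Perm.mul_apply, ih, heisAction_yWord hx hp₀ hp₁,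
      add_assoc, Nat.cast_succ, add_one_mul]

theorem heisAction_commutatorElement_pow (hx : x₀ ≠ x₁) (hp₀ : p ≠ 0) (hp₁ : p ≠ 1) (n : ℕ) :
    heisAction x₀ x₁ p ⁅xWord x₀ x₁ p ^ n, yWord x₀ x₁ p ^ n⁆ (0, ⟨true, n, true, n, n ^ 2⟩) =
      (0, ⟨true, n, true, n, 0⟩) := by
  have hy : heisAction x₀ x₁ p (yWord x₀ x₁ p ^ n)⁻¹ (0, ⟨true, n, true, n, n ^ 2⟩) =
      (0, ⟨true, n, true, 0, 0⟩) := by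
    rw [map_inv, Equiv.Perm.inv_eq_iff_eq, heisAction_yWord_pow hx hp₀ hp₁, zero_add, zero_add, sq]
  have hx' : heisAction x₀ x₁ p (xWord x₀ x₁ p ^ n)⁻¹ (0, ⟨true, n, true, 0, 0⟩) =
      (0, ⟨true, 0, true, 0, 0⟩) := by
    rw [map_inv, Equiv.Perm.inv_eq_iff_eq, heisAction_xWord_pow hx hp₀, zero_add]
  simp only [commutatorElement_def, map_mul, Equiv.Perm.mul_apply, hy, hx',
    heisAction_yWord_pow hx hp₀ hp₁, heisAction_xWord_pow hx hp₀, zero_add, mul_zero]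

end Evaluation

/-! ### Isoperimetric spectra of block groups -/

section BlockSpectrum

variable [DecidableEq ι] {x₀ x₁ : ι}

theorem sq_le_isoSpec_mul_sq [Finite ι] (hx : x₀ ≠ x₁) {N : Subgroup (FreeGroup ι)} [N.Normal]
    {p M m : ℕ} (hp₀ : p ≠ 0) (hp₁ : p ≠ 1) (hN : N ≤ (blockAction x₀ x₁ (p, M)).ker)
    (hcomm : ⁅xWord x₀ x₁ p, yWord x₀ x₁ p⁆ ∈ N) (hm : 8 * p + 16 ≤ m) (hmM : m ≤ M) (n : ℕ) :
    n ^ 2 ≤ isoSpec (QuotientGroup.mk' N) (8 * p + 16) m (n * (8 * p + 16)) * m ^ 2 := by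
  set φ := QuotientGroup.mk' N
  set w := ⁅xWord x₀ x₁ p ^ n, yWord x₀ x₁ p ^ n⁆
  have hw {k : ℕ} (hk : 8 * p + 16 ≤ k) : w ∈ Subgroup.normalClosure (triv φ k) := by
    have hxy : ⁅xWord x₀ x₁ p, yWord x₀ x₁ p⁆ ∈ triv φ k :=
      ⟨(wnorm_commutatorElement_xWord_yWord_le x₀ x₁ p).trans hk,
        (QuotientGroup.eq_one_iff _).2 hcomm⟩
    exact commutatorElement_pow_mem (Subgroup.subset_normalClosure hxy) n n
  have hrel : ∀ r ∈ triv φ m, wnorm r ≤ m ∧ blockAction x₀ x₁ (p, M) r = 1 :=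
    fun r hr => ⟨hr.1, hN ((QuotientGroup.eq_one_iff r).1 hr.2)⟩
  obtain ⟨c, hc, hshift⟩ := (areaLe_area (hw hm)).exists_heisAction_eq_centralShift hp₁ hmM hrel
    (0, ⟨true, n, true, n, n ^ 2⟩)
  have hcn : c = -n ^ 2 := by
    rw [heisAction_commutatorElement_pow hx hp₀ hp₁] at hshift
    simp only [centralShift, Prod.mk.injEq, HeisFiber.mk.injEq, true_and] at hshift
    linarith
  have hsq : n ^ 2 ≤ area (triv φ m) w * m ^ 2 := by
    rw [hcn, abs_neg, abs_of_nonneg (by positivity)] at hc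
    exact_mod_cast hc
  exact hsq.trans (Nat.mul_le_mul_right _
    (area_le_isoSpec φ m (hw le_rfl) (wnorm_commutatorElement_xWord_pow_yWord_pow_le x₀ x₁ p n)))

variable (x₀ x₁) in
/-- The least length of relators of `blockApprox x₀ x₁ D L` with respect to which its words have
area at most their length. -/
noncomputable def relatorBound (D : Finset (ℕ × ℕ)) (L : ℕ) : ℕ :=
  sInf {B | ∀ w ∈ blockApprox x₀ x₁ D L,
    AreaLe {r | wnorm r ≤ B ∧ r ∈ blockApprox x₀ x₁ D L} w (wnorm w)}

variable {D : Finset (ℕ × ℕ)}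

theorem areaLe_of_mem_blockApprox (hx : x₀ ≠ x₁) (h₀ : (0, 0) ∈ D) {L : ℕ} {w : FreeGroup ι}
    (hw : w ∈ blockApprox x₀ x₁ D L) :
    AreaLe {r | wnorm r ≤ relatorBound x₀ x₁ D L ∧ r ∈ blockApprox x₀ x₁ D L} w (wnorm w) :=
  Nat.sInf_mem (exists_areaLe_of_mem_blockApprox hx h₀ L) w hw

theorem isoSpec_blockKernel_le (hx : x₀ ≠ x₁) (h₀ : (0, 0) ∈ D) {D' : Set (ℕ × ℕ)}
    (hDD' : (D : Set (ℕ × ℕ)) ⊆ D') {L k m : ℕ} (hk : k ≤ L) (hm : relatorBound x₀ x₁ D L ≤ m)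
    (hD' : ∀ d ∈ D', d ∈ D ∨ 2 * relatorBound x₀ x₁ D L < d.1) (n : ℕ) :
    isoSpec (QuotientGroup.mk' (blockKernel x₀ x₁ D')) k m n ≤ n := by
  refine isoSpec_le fun w hw hn => ⟨wnorm w, hn, ?_⟩
  have hwD : w ∈ blockApprox x₀ x₁ D L := by
    refine Subgroup.normalClosure_le_normal (fun r hr => ?_) hw
    exact mem_blockApprox_of_mem_blockKernel h₀ (hr.1.trans hk)
      (blockKernel_anti hDD' ((QuotientGroup.eq_one_iff r).1 hr.2))
  refine (areaLe_of_mem_blockApprox hx h₀ hwD).mono ?_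
  rintro r ⟨hr, hrD⟩
  refine ⟨hr.trans hm, ?_⟩
  refine (QuotientGroup.eq_one_iff r).2 (mem_blockKernel_of_forall_mem_or_lt h₀ ?_
    (blockApprox_le_blockKernel L hrD))
  exact fun d hd => (hD' d hd).imp id (Nat.mul_le_mul_left 2 hr).trans_lt

end BlockSpectrum

/-! ### Fast growing parameters -/

section Parameters

variable (β : Finset (ℕ × ℕ) → ℕ → ℕ)

/-- The `i`-th relator length `m_i`, chosen after the set `s.1` of the previous block parameters
and the level `s.2 = p_i`. It exceeds the bounds `β` for all possible subsets of `s.1` and words of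
length `i (8 p_i + 16)`, where `8 p_i + 16` bounds the commutator of `xWord` and `yWord`. -/
def nextRelatorLength (i : ℕ) (s : Finset (ℕ × ℕ) × ℕ) : ℕ :=
  s.1.powerset.sup (β · (i * (8 * s.2 + 16))) + (i + 1) * (8 * s.2 + 16)

/-- The recursive choice of block parameters: the set consisting of `(0, 0)` and the first `i`
parameters, and the level `p_i`. -/
def paramState : ℕ → Finset (ℕ × ℕ) × ℕ
  | 0 => ({(0, 0)}, 3)
  | i + 1 =>
    let M := (i + 1) * nextRelatorLength β i (paramState i)
    (insert ((paramState i).2, M) (paramState i).1, 2 * M + 3)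

/-- The level `p_i` of the `i`-th block parameter. -/
def paramLevel (i : ℕ) : ℕ := (paramState β i).2

/-- The length `m_i` of the relators which distinguish the groups with and without the `i`-th
block. -/
def relatorLength (i : ℕ) : ℕ := nextRelatorLength β i (paramState β i)

/-- The `i`-th block parameter `(p_i, M_i)` with `M_i = (i + 1) m_i`. -/
def blockParam (i : ℕ) : ℕ × ℕ := (paramLevel β i, (i + 1) * relatorLength β i)

theorem succ_mul_le_relatorLength (i : ℕ) :
    (i + 1) * (8 * paramLevel β i + 16) ≤ relatorLength β i :=
  Nat.le_add_left _ _

theorem le_relatorLength {D : Finset (ℕ × ℕ)} {i : ℕ} (hD : D ⊆ (paramState β i).1) :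
    β D (i * (8 * paramLevel β i + 16)) ≤ relatorLength β i :=
  (Finset.le_sup (f := (β · (i * (8 * paramLevel β i + 16)))) (Finset.mem_powerset.2 hD)).trans
    (Nat.le_add_right _ _)

theorem two_mul_relatorLength_add_three_le_succ (i : ℕ) :
    2 * relatorLength β i + 3 ≤ paramLevel β (i + 1) :=
  Nat.add_le_add_right (Nat.mul_le_mul_left 2 (Nat.le_mul_of_pos_left _ i.succ_pos)) 3

theorem paramLevel_lt_relatorLength (i : ℕ) : paramLevel β i < relatorLength β i := by
  nlinarith [succ_mul_le_relatorLength β i, Nat.zero_le (i * (8 * paramLevel β i + 16))]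

theorem paramLevel_strictMono : StrictMono (paramLevel β) := by
  refine strictMono_nat_of_lt_succ fun i => ?_
  have h₁ := paramLevel_lt_relatorLength β i
  have h₂ := two_mul_relatorLength_add_three_le_succ β i
  omega

theorem add_three_le_paramLevel (i : ℕ) : i + 3 ≤ paramLevel β i := by
  induction i with
  | zero => exact le_rfl
  | succ i ih => exact (Nat.succ_le_succ ih).trans (paramLevel_strictMono β i.lt_succ_self)

theorem two_mul_relatorLength_add_three_le {i j : ℕ} (hij : i < j) :
    2 * relatorLength β i + 3 ≤ paramLevel β j :=
  (two_mul_relatorLength_add_three_le_succ β i).trans ((paramLevel_strictMono β).monotone hij)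

theorem add_two_le_paramLevel {i j : ℕ} (hij : i < j) : paramLevel β i + 2 ≤ paramLevel β j := by
  have h₁ := paramLevel_lt_relatorLength β i
  have h₂ := two_mul_relatorLength_add_three_le β hij
  omega

theorem zero_mem_paramState (i : ℕ) : (0, 0) ∈ (paramState β i).1 := by
  induction i with
  | zero => exact Finset.mem_singleton_self _
  | succ i ih => exact Finset.mem_insert_of_mem ih

theorem blockParam_mem_paramState {i j : ℕ} (hji : j < i) :
    blockParam β j ∈ (paramState β i).1 := by
  induction i, hji using Nat.le_induction with
  | base => exact Finset.mem_insert_self _ _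
  | succ i _ ih => exact Finset.mem_insert_of_mem ih

/-- The set of block parameters defining the group attached to `J`. -/
def blockParams (J : Set ℕ) : Set (ℕ × ℕ) := insert (0, 0) (blockParam β '' J)

open Classical in
/-- The elements of `blockParams β J` which are chosen before step `i`. -/
noncomputable def blockParamsBelow (J : Set ℕ) (i : ℕ) : Finset (ℕ × ℕ) :=
  {d ∈ (paramState β i).1 | d ∈ blockParams β J}

variable (J : Set ℕ) (i : ℕ)

theorem mem_blockParamsBelow {d : ℕ × ℕ} :
    d ∈ blockParamsBelow β J i ↔ d ∈ (paramState β i).1 ∧ d ∈ blockParams β J := by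
  simp [blockParamsBelow]

theorem blockParamsBelow_subset_paramState : blockParamsBelow β J i ⊆ (paramState β i).1 :=
  fun _ hd => ((mem_blockParamsBelow β J i).1 hd).1

theorem coe_blockParamsBelow_subset :
    (blockParamsBelow β J i : Set (ℕ × ℕ)) ⊆ blockParams β J :=
  fun _ hd => ((mem_blockParamsBelow β J i).1 hd).2

theorem zero_mem_blockParamsBelow : (0, 0) ∈ blockParamsBelow β J i :=
  (mem_blockParamsBelow β J i).2 ⟨zero_mem_paramState β i, Set.mem_insert _ _⟩

variable {J} in
theorem mem_blockParamsBelow_or {d : ℕ × ℕ} (hd : d ∈ blockParams β J) :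
    d ∈ blockParamsBelow β J i ∨ ∃ j ∈ J, i ≤ j ∧ d = blockParam β j := by
  rcases id hd with rfl | ⟨j, hj, rfl⟩
  · exact .inl (zero_mem_blockParamsBelow β J i)
  · rcases le_or_gt i j with hij | hji
    · exact .inr ⟨j, hj, hij, rfl⟩
    · exact .inl ((mem_blockParamsBelow β J i).2 ⟨blockParam_mem_paramState β hji, hd⟩)

end Parameters

/-! ### Continuum many groups -/

/-- An encoding of sets of natural numbers such that distinct sets have codes with infinite
differences: infinitely many copies of `I` and of its complement, side by side. -/
def infiniteCode (I : Set ℕ) : Set ℕ := {a | a.unpair.1 / 2 ∈ I ↔ Even a.unpair.1}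

theorem exists_le_mem_infiniteCode_diff {I J : Set ℕ} (hIJ : I ≠ J) (c : ℕ) :
    ∃ a, c ≤ a ∧ a ∈ infiniteCode I ∧ a ∉ infiniteCode J := by
  obtain ⟨x, hx⟩ : ∃ x, ¬(x ∈ I ↔ x ∈ J) := not_forall.1 fun h => hIJ (Set.ext h)
  by_cases hI : x ∈ I
  · refine ⟨Nat.pair (2 * x) c, Nat.right_le_pair _ _, ?_⟩
    have hJ : x ∉ J := fun hJ => hx (iff_of_true hI hJ)
    simp [infiniteCode, hI, hJ]
  · refine ⟨Nat.pair (2 * x + 1) c, Nat.right_le_pair _ _, ?_⟩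
    have hJ : x ∈ J := by_contra fun hJ => hx (iff_of_false hI hJ)
    have hdiv : (2 * x + 1) / 2 = x := by omega
    simp [infiniteCode, hdiv, hI, hJ]

theorem not_specLE_of_sq_le {f g : ℕ → ℕ → ℕ → ℝ}
    (h : ∀ C > 0, ∃ k > 0, ∃ m, C * k ≤ m ∧ (∀ n, g (C * k) m n ≤ n) ∧
      ∃ c : ℝ, 0 ≤ c ∧ ∀ q : ℕ, (q : ℝ) ^ 2 ≤ c * f k (C * m) (q * k)) : ¬SpecLE f g := by
  rintro ⟨C, hC, hfg⟩
  obtain ⟨k, hk, m, hkm, hg, c, hc, hf⟩ := h C hC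
  have hm : 0 < m := (Nat.mul_pos hC hk).trans_le hkm
  have hlin (q : ℕ) (hq : 0 < q) : f k (C * m) (q * k) ≤ (C * C * k + C * k + C) * q := by
    have hm' : (1 : ℝ) ≤ m := mod_cast hm
    have hq' : (1 : ℝ) ≤ q := mod_cast hq
    calc f k (C * m) (q * k)
        ≤ C * g (C * k) m (C * (q * k)) + C * ((q * k : ℕ) : ℝ) / m + C :=
          hfg k m (q * k) hk hm (Nat.mul_pos hq hk) hkm
      _ ≤ C * ((C * (q * k) : ℕ) : ℝ) + C * ((q * k : ℕ) : ℝ) + C * q := by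
          gcongr
          · exact hg _
          · exact div_le_self (by positivity) hm'
          · exact le_mul_of_one_le_right (by positivity) hq'
      _ = (C * C * k + C * k + C) * q := by push_cast; ring
  obtain ⟨q, hq⟩ := exists_nat_gt (c * (C * C * k + C * k + C))
  have hq₀ : (0 : ℝ) < q := lt_of_le_of_lt (by positivity) hq
  have hsq : (q : ℝ) ^ 2 < q ^ 2 :=
    calc (q : ℝ) ^ 2 ≤ c * f k (C * m) (q * k) := hf q
      _ ≤ c * ((C * C * k + C * k + C) * q) := by
          gcongr
          exact hlin q (mod_cast hq₀)
      _ = c * (C * C * k + C * k + C) * q := by ring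
      _ < q * q := by gcongr
      _ = q ^ 2 := by ring
  exact lt_irrefl _ hsq

theorem specLE_refl (f : ℕ → ℕ → ℕ → ℝ) : SpecLE f f := by
  refine ⟨1, one_pos, fun k m n _ _ _ _ => ?_⟩
  have hnm : (0 : ℝ) ≤ n / m := by positivity
  simp only [one_mul, Nat.cast_one]
  linarith

theorem commutatorElement_mem_blockKernel_blockParams [DecidableEq ι] {x₀ x₁ : ι}
    (hx : x₀ ≠ x₁)
    (β : Finset (ℕ × ℕ) → ℕ → ℕ) (J : Set ℕ) (i : ℕ) :
    ⁅xWord x₀ x₁ (paramLevel β i), yWord x₀ x₁ (paramLevel β i)⁆ ∈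
      blockKernel x₀ x₁ (blockParams β J) := by
  have hi := add_three_le_paramLevel β i
  refine mem_blockKernel.2 ?_
  rintro _ (rfl | ⟨j, -, rfl⟩)
  · exact blockAction_commutatorElement_eq_one hx (by omega) (by simp) (by simp) (by simp; omega)
  · have hj := add_three_le_paramLevel β j
    have hgap : paramLevel β i = paramLevel β j ∨ paramLevel β i + 2 ≤ paramLevel β j ∨
        paramLevel β j + 2 ≤ paramLevel β i := by
      rcases lt_trichotomy i j with hij | rfl | hji
      · exact .inr (.inl (add_two_le_paramLevel β hij))
      · exact .inl rfl
      · exact .inr (.inr (add_two_le_paramLevel β hji))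
    refine blockAction_commutatorElement_eq_one hx (by omega) ?_ ?_ ?_ <;>
      dsimp only [blockParam] <;> omega

section BlockGroup

variable {n : ℕ} {x₀ x₁ : Fin n}

variable (x₀ x₁) in
/-- The marked group attached to a set `J` of indices of block parameters. -/
noncomputable def blockGroup (J : Set ℕ) : MarkedGroup n :=
  ⟨blockKernel x₀ x₁ (blockParams (relatorBound x₀ x₁) J), blockKernel_normal _⟩

theorem mgSpec_blockGroup (J : Set ℕ) (k m N : ℕ) :
    mgSpec (blockGroup x₀ x₁ J) k m N =
      isoSpec (QuotientGroup.mk' (blockKernel x₀ x₁ (blockParams (relatorBound x₀ x₁) J))) k m N :=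
  rfl

theorem blockGroup_mem_closure_Hset (hx : x₀ ≠ x₁) (J : Set ℕ) :
    blockGroup x₀ x₁ J ∈ closure (Hset n) := by
  set β := relatorBound x₀ x₁
  rw [closure_induced, mem_closure_iff]
  intro U hU hJU
  obtain ⟨F, u, hu, hFU⟩ := isOpen_pi_iff.1 hU _ hJU
  set L := F.sup wnorm
  set D := blockParamsBelow β J (2 * L)
  have h₀ : (0, 0) ∈ D := zero_mem_blockParamsBelow β J (2 * L)
  refine ⟨_, hFU fun w hw => ?_, ⟨_, blockApprox_mem_Hset hx h₀ L, rfl⟩⟩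
  have hwL : wnorm w ≤ L := Finset.le_sup (f := wnorm) hw
  have hfar : ∀ d ∈ blockParams β J, d ∈ D ∨ 2 * wnorm w < d.1 := by
    refine fun d hd => (mem_blockParamsBelow_or β (2 * L) hd).imp id ?_
    rintro ⟨j, -, hLj, rfl⟩
    have hj := add_three_le_paramLevel β j
    dsimp only [blockParam]
    omega
  have hiff : w ∈ blockApprox x₀ x₁ D L ↔ w ∈ blockKernel x₀ x₁ (blockParams β J) :=
    ⟨fun h => mem_blockKernel_of_forall_mem_or_lt h₀ hfar (blockApprox_le_blockKernel L h),
      fun h => mem_blockApprox_of_mem_blockKernel h₀ hwL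
        (blockKernel_anti (coe_blockParamsBelow_subset β J (2 * L)) h)⟩
  have hchi : mgChi ⟨blockApprox x₀ x₁ D L, inferInstance⟩ w = mgChi (blockGroup x₀ x₁ J) w :=
    decide_eq_decide.2 hiff
  exact hchi ▸ (hu w hw).2

theorem mgSpec_blockGroup_le (hx : x₀ ≠ x₁) {J : Set ℕ} {i : ℕ} (hi : i ∉ J) {k : ℕ}
    (hk : k ≤ i * (8 * paramLevel (relatorBound x₀ x₁) i + 16)) (N : ℕ) :
    mgSpec (blockGroup x₀ x₁ J) k (relatorLength (relatorBound x₀ x₁) i) N ≤ N := by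
  set β := relatorBound x₀ x₁
  have hm := le_relatorLength β (blockParamsBelow_subset_paramState β J i)
  rw [mgSpec_blockGroup]
  refine Nat.cast_le.2 (isoSpec_blockKernel_le hx (zero_mem_blockParamsBelow β J i)
    (coe_blockParamsBelow_subset β J i) hk hm (fun d hd => ?_) N)
  refine (mem_blockParamsBelow_or β i hd).imp id ?_
  rintro ⟨j, hj, hij, rfl⟩
  have hgap := two_mul_relatorLength_add_three_le β (hij.lt_of_ne fun h => hi (h ▸ hj))
  exact (Nat.mul_le_mul_left 2 hm).trans_lt ((Nat.lt_add_of_pos_right three_pos).trans_le hgap)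

theorem sq_le_mgSpec_blockGroup (hx : x₀ ≠ x₁) {J : Set ℕ} {i : ℕ} (hi : i ∈ J) {m : ℕ}
    (hm : 8 * paramLevel (relatorBound x₀ x₁) i + 16 ≤ m)
    (hmM : m ≤ (i + 1) * relatorLength (relatorBound x₀ x₁) i) (q : ℕ) :
    (q : ℝ) ^ 2 ≤ m ^ 2 * mgSpec (blockGroup x₀ x₁ J) (8 * paramLevel (relatorBound x₀ x₁) i + 16) m
      (q * (8 * paramLevel (relatorBound x₀ x₁) i + 16)) := by
  set β := relatorBound x₀ x₁
  have hp := add_three_le_paramLevel β i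
  have hker : blockKernel x₀ x₁ (blockParams β J) ≤ (blockAction x₀ x₁ (blockParam β i)).ker :=
    iInf₂_le _ (.inr ⟨i, hi, rfl⟩)
  have hsq := sq_le_isoSpec_mul_sq hx (by omega) (by omega) hker
    (commutatorElement_mem_blockKernel_blockParams hx β J i) hm hmM q
  rw [mgSpec_blockGroup, mul_comm]
  exact_mod_cast hsq

theorem not_precIs_blockGroup (hx : x₀ ≠ x₁) {I J : Set ℕ}
    (hIJ : ∀ c, ∃ i, c ≤ i ∧ i ∈ I ∧ i ∉ J) :
    ¬precIs (blockGroup x₀ x₁ I) (blockGroup x₀ x₁ J) := by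
  refine not_specLE_of_sq_le fun C hC => ?_
  obtain ⟨i, hCi, hiI, hiJ⟩ := hIJ C
  set p := paramLevel (relatorBound x₀ x₁) i
  set m := relatorLength (relatorBound x₀ x₁) i
  have hm : (i + 1) * (8 * p + 16) ≤ m := succ_mul_le_relatorLength _ i
  have hCk : C * (8 * p + 16) ≤ i * (8 * p + 16) := Nat.mul_le_mul_right _ hCi
  have hkm : 8 * p + 16 ≤ C * m := by nlinarith
  have hmM : C * m ≤ (i + 1) * m := Nat.mul_le_mul_right _ (Nat.le_succ_of_le hCi)
  exact ⟨8 * p + 16, by omega, m, by linarith, mgSpec_blockGroup_le hx hiJ hCk,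
    ((C * m : ℕ) : ℝ) ^ 2, by positivity, sq_le_mgSpec_blockGroup hx hiI hkm hmM⟩

end BlockGroup

/-- For every `n ≥ 2`, the closure `ℋ̄_n` of `ℋ_n` in `𝒢_n` contains
continuum many pairwise `≼_is`-incomparable elements. -/
theorem continuum_antichain_in_closure_of_hyperbolic (n : ℕ) (hn : 2 ≤ n) :
    ∃ f : Set ℕ → MarkedGroup n, Injective f ∧
      (∀ I : Set ℕ, f I ∈ closure (Hset n)) ∧
      ∀ I J : Set ℕ, I ≠ J → ¬ precIs (f I) (f J) ∧ ¬ precIs (f J) (f I) := by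
  have hx : (⟨0, by omega⟩ : Fin n) ≠ ⟨1, by omega⟩ := by simp
  set f : Set ℕ → MarkedGroup n := fun I => blockGroup _ _ (infiniteCode I)
  have hf {I J : Set ℕ} (hIJ : I ≠ J) : ¬precIs (f I) (f J) :=
    not_precIs_blockGroup hx (exists_le_mem_infiniteCode_diff hIJ)
  have hinj : Injective f := fun I J h => by_contra fun hIJ => hf hIJ (h ▸ specLE_refl _)
  exact ⟨f, hinj, fun I => blockGroup_mem_closure_Hset hx _,
    fun I J hIJ => ⟨hf hIJ, hf hIJ.symm⟩⟩

end IsoSpecPaper
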